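/- For n ≥ 5, the Segre product of n copies of ℙ³ (tensors in (ℂ⁴)^{⊗n}) is k-identifiable for every positive integer k with k ≤ (4^n − 4^{n−3})/(3n+1). -/

import Mathlib

open scoped TensorProduct
open PiTensorProduct

noncomputable section

/-- The space of tensors `V = ℂ^{a₁+1} ⊗ ⋯ ⊗ ℂ^{a_q+1}`. -/
abbrev Ten (q : ℕ) (a : Fin q → ℕ) : Type :=
  ⨂[ℂ] i : Fin q, (Fin (a i + 1) → ℂ)

/-- Index type for the coordinates on the parameter space `W_k`. -/
abbrev WIdx (q : ℕ) (a : Fin q → ℕ) (k : ℕ) : Type :=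
  Fin k × Σ j : Fin q, Fin (a j + 1)

/-- Index type for the standard (decomposable) basis of `Ten q a`. -/
abbrev BIdx (q : ℕ) (a : Fin q → ℕ) : Type := ∀ j : Fin q, Fin (a j + 1)

/-- A tensor is decomposable if it is `v₁ ⊗ ⋯ ⊗ v_q` with all `vᵢ ≠ 0`. -/
def IsDecomposable {q : ℕ} {a : Fin q → ℕ} (t : Ten q a) : Prop :=
  ∃ v : ∀ j : Fin q, Fin (a j + 1) → ℂ, (∀ j, v j ≠ 0) ∧ t = tprod ℂ v

/-- The affine tangent space at `v₁ ⊗ ⋯ ⊗ v_q` to the cone over the Segre variety: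
the span of all tensors obtained by replacing one factor of `v` by an arbitrary vector. -/
def tangent {q : ℕ} (a : Fin q → ℕ) (v : ∀ j : Fin q, Fin (a j + 1) → ℂ) :
    Submodule ℂ (Ten q a) :=
  Submodule.span ℂ
    {x | ∃ (j : Fin q) (u : Fin (a j + 1) → ℂ), x = tprod ℂ (Function.update v j u)}

/-- The map `Φ : W_k → V` sending a `k`-tuple of factor vectors to the sum of the
corresponding decomposable tensors. -/
def Phi {q : ℕ} (a : Fin q → ℕ) {k : ℕ}
    (p : Fin k → ∀ j : Fin q, Fin (a j + 1) → ℂ) : Ten q a :=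
  ∑ i, tprod ℂ (p i)

/-- Evaluation of a polynomial function on `W_k` at a parameter point. -/
def evalW {q : ℕ} {a : Fin q → ℕ} {k : ℕ}
    (F : MvPolynomial (WIdx q a k) ℂ)
    (p : Fin k → ∀ j : Fin q, Fin (a j + 1) → ℂ) : ℂ :=
  MvPolynomial.eval (fun x => p x.1 x.2.1 x.2.2) F

/-- `k`-identifiability of the Segre product `ℙ^{a₁} × ⋯ × ℙ^{a_q}`:
there is a nonzero polynomial function `F` on `W_k` such that whenever `F(p) ≠ 0`,
the tensor `Φ(p)` has a rank-`k` decomposition, and any two rank-`k` decompositions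
of `Φ(p)` agree as multisets of decomposable tensors. -/
def Identifiable (q : ℕ) (a : Fin q → ℕ) (k : ℕ) : Prop :=
  ∃ F : MvPolynomial (WIdx q a k) ℂ,
    (∃ p, evalW F p ≠ 0) ∧
    ∀ p, evalW F p ≠ 0 →
      ((∃ t : Fin k → Ten q a, (∀ i, IsDecomposable (t i)) ∧ ∑ i, t i = Phi a p) ∧
       ∀ s t : Fin k → Ten q a,
         (∀ i, IsDecomposable (s i)) → (∀ i, IsDecomposable (t i)) →
         ∑ i, s i = Phi a p → ∑ i, t i = Phi a p →
         Finset.univ.val.map s = Finset.univ.val.map t)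

/-- The standard decomposable basis vector of `Ten q a` indexed by `f`. -/
def basisVec {q : ℕ} (a : Fin q → ℕ) (f : BIdx q a) : Ten q a :=
  tprod ℂ fun j => Pi.single (f j) 1

/-- The vector of `Ten q a` with coordinates `c` in the standard basis. -/
def fromCoords {q : ℕ} (a : Fin q → ℕ) (c : BIdx q a → ℂ) : Ten q a :=
  ∑ f : BIdx q a, c f • basisVec a f

/-- Evaluation of a polynomial function on `W_k × V^e` at a parameter point. -/
def evalWV {q : ℕ} {a : Fin q → ℕ} {k e : ℕ}
    (F : MvPolynomial (WIdx q a k ⊕ (Fin e × BIdx q a)) ℂ)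
    (p : Fin k → ∀ j : Fin q, Fin (a j + 1) → ℂ)
    (c : Fin e → BIdx q a → ℂ) : ℂ :=
  MvPolynomial.eval (Sum.elim (fun x => p x.1 x.2.1 x.2.2) (fun y => c y.1 y.2)) F

/-- `TangentGeneral q a k d` says: the general linear subspace of `V` of dimension `d`
which is tangent to the Segre at `k` general points is tangent only at those points.
Concretely, with `e = d - k(1 + Σᵢ aᵢ)`, there is a nonzero polynomial function `F` on
`W_k × V^e` such that whenever `F ≠ 0` at `(p, c)`, the space `L` spanned by the tangent
spaces at the `k` decomposable tensors determined by `p` together with the `e` extra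
vectors determined by `c` has dimension exactly `d`, and any decomposable tensor whose
tangent space lies in `L` is a scalar multiple of one of the `k` given ones. -/
def TangentGeneral (q : ℕ) (a : Fin q → ℕ) (k d : ℕ) : Prop :=
  ∃ F : MvPolynomial (WIdx q a k ⊕ (Fin (d - k * (1 + ∑ j, a j)) × BIdx q a)) ℂ,
    (∃ p c, evalWV F p c ≠ 0) ∧
    ∀ p c, evalWV F p c ≠ 0 →
      (Module.finrank ℂ
          ↥((⨆ i, tangent a (p i)) ⊔
            Submodule.span ℂ (Set.range fun m => fromCoords a (c m))) = d ∧
       ∀ w : ∀ j : Fin q, Fin (a j + 1) → ℂ, (∀ j, w j ≠ 0) →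
         tangent a w ≤
           (⨆ i, tangent a (p i)) ⊔
             Submodule.span ℂ (Set.range fun m => fromCoords a (c m)) →
         ∃ (i : Fin k) (t : ℂ), tprod ℂ w = t • tprod ℂ (p i))

/-!
Take a generic point `x` of `W_k`, with algebraically independent coordinates in a field `L`, and
let `y` be any other decomposition of `Φ(x)` over `L`. Derivations of `L` take arbitrary values at
the coordinates of `x`; applying them to `Φ(x) = Φ(y)` shows that the span `T` of the tangent spaces
to the Segre at the points of `x` lies in that of `y`, so the two agree once the tangent spaces at
`x` are independent. A summand `t` of `Φ(y)` lies in `T`, so it is `D Φ(x) = D Φ(y)` for some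
derivation `D`. Independence at `y` forces `D` to rescale the factors of `y` only, hence `D`
preserves `T`; if the second fundamental form of `T` at `x` is nondegenerate, `D` rescales the
factors of `x` only, and `t` is a combination of the summands of `Φ(x)`. Independence makes the
summands of `Φ(x)` the only decomposable tensors in their span. A Nullstellensatz argument transfers
this uniqueness from the generic point to a nonempty open set.

Both open conditions follow from the linear independence of tensors built from frames of the
factors. Specialising the frames of one factor to permutations of a single basis splits such a
system into slices, each a system of the same kind in one factor less: a point contributes its
tangent space to one slice and a single general tensor to each of the others. For `ℙ³` the resulting
recursive inequalities hold in the stated range.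
-/

open scoped Finset

section Derivations

theorem exists_derivation_algebraMap_X {k σ L : Type*} [Field k] [CharZero k] [Field L]
    [Algebra (MvPolynomial σ k) L] [FaithfulSMul (MvPolynomial σ k) L]
    [Algebra.IsAlgebraic (MvPolynomial σ k) L] (u : σ → L) :
    ∃ D : Derivation ℤ L L, ∀ i, D (algebraMap (MvPolynomial σ k) L (MvPolynomial.X i)) = u i := by
  let R := MvPolynomial σ k
  let K := FractionRing R
  let : Algebra K L := FractionRing.liftAlgebra R L
  have : IsScalarTower R K L := FractionRing.isScalarTower_liftAlgebra R L
  let : Algebra k L := ((algebraMap R L).comp MvPolynomial.C).toAlgebra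
  have : IsScalarTower k R L := IsScalarTower.of_algebraMap_eq fun _ => rfl
  have : CharZero K := charZero_of_injective_algebraMap (IsFractionRing.injective R K)
  have : Algebra.IsAlgebraic K L :=
    (IsFractionRing.comap_isAlgebraic_iff (A := R) (K := K) (C := L)).1 inferInstance
  have : Algebra.FormallyEtale R K := Algebra.FormallyEtale.of_isLocalization (nonZeroDivisors R)
  have : Algebra.FormallyEtale K L := Algebra.FormallyEtale.of_isSeparable K L
  have : Algebra.FormallyEtale R L := Algebra.FormallyEtale.comp R K L
  let d : Derivation k R L := MvPolynomial.mkDerivation k u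
  let φ : Ω[L⁄k] →ₗ[L] L := (LinearMap.liftBaseChange L d.liftKaehlerDifferential) ∘ₗ
    (KaehlerDifferential.tensorKaehlerEquivOfFormallyEtale k R L).symm.toLinearMap
  refine ⟨(φ.compDer (KaehlerDifferential.D k L)).restrictScalars ℤ, fun i => ?_⟩
  change LinearMap.liftBaseChange L d.liftKaehlerDifferential
    ((KaehlerDifferential.tensorKaehlerEquivOfFormallyEtale k R L).symm
      (KaehlerDifferential.D k L (algebraMap R L (MvPolynomial.X i)))) = u i
  rw [KaehlerDifferential.tensorKaehlerEquivOfFormallyEtale_symm_D_algebraMap,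
    LinearMap.liftBaseChange_tmul, one_smul, Derivation.liftKaehlerDifferential_comp_D]
  exact MvPolynomial.mkDerivation_X k u i

theorem derivation_prod {R J : Type*} [CommRing R] [DecidableEq J] (D : Derivation ℤ R R)
    (s : Finset J) (a : J → R) :
    D (∏ j ∈ s, a j) = ∑ j ∈ s, D (a j) * ∏ i ∈ s.erase j, a i := by
  induction s using Finset.induction_on with
  | empty => simp
  | insert l s hl ih =>
    rw [Finset.prod_insert hl, D.leibniz, ih, Finset.sum_insert hl, Finset.erase_insert hl,
      Finset.smul_sum, smul_eq_mul, mul_comm, add_comm]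
    refine congrArg₂ _ rfl (Finset.sum_congr rfl fun j hj => ?_)
    have hlj : l ≠ j := fun h => hl (h ▸ hj)
    rw [Finset.erase_insert_of_ne hlj, Finset.prod_insert (by simp [hl]), smul_eq_mul]
    ring

theorem derivation_comp_sum {R ι X : Type*} [CommRing R] (D : Derivation ℤ R R) (s : Finset ι)
    (t : ι → X → R) :
    D ∘ (∑ i ∈ s, t i) = ∑ i ∈ s, D ∘ t i := by
  ext f
  simp only [Function.comp_apply, Finset.sum_apply, map_sum]

end Derivations

section LinearIndependence

theorem eq_repr_smul_of_forall_ne_repr_eq_zero {R M α : Type*} [Semiring R] [AddCommMonoid M]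
    [Module R M] (b : Module.Basis α R M) {w : M} {a₀ : α} (hw : ∀ a ≠ a₀, b.repr w a = 0) :
    w = b.repr w a₀ • b a₀ := by
  refine b.repr.injective (Finsupp.ext fun a => ?_)
  obtain rfl | ha := eq_or_ne a a₀
  · simp
  · simp [hw a ha, ha]

theorem exists_polynomial_forall_linearIndepOn {K σ ζ η : Type*} [Field K] [Finite ζ] [Finite η]
    (M : ζ → η → MvPolynomial σ K) {A : Set ζ} {p : σ → K}
    (h : LinearIndepOn K (fun i f => MvPolynomial.eval p (M i f)) A) :
    ∃ d : MvPolynomial σ K, MvPolynomial.eval p d ≠ 0 ∧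
      ∀ {F : Type*} [Field F] (φ : MvPolynomial σ K →+* F), φ d ≠ 0 →
        LinearIndepOn F (fun i f => φ (M i f)) A := by
  classical
  have := Fintype.ofFinite A
  have := Fintype.ofFinite η
  let N : Matrix A η (MvPolynomial σ K) := Matrix.of fun i f => M i f
  let Np : Matrix A η K := N.map (MvPolynomial.eval p)
  have range_eq_top : LinearMap.range Np.mulVecLin = ⊤ :=
    Submodule.eq_top_of_finrank_eq <| by
      rw [Module.finrank_fintype_fun_eq_card]
      exact LinearIndependent.rank_matrix h
  obtain ⟨B, hB⟩ := Matrix.mulVec_surjective_iff_exists_right_inverse.1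
    (LinearMap.range_eq_top.1 range_eq_top : Function.Surjective Np.mulVec)
  let C : Matrix η A (MvPolynomial σ K) := B.map MvPolynomial.C
  refine ⟨(N * C).det, ?_, fun {F} _ φ hd => ?_⟩
  · have eval_C : C.map (MvPolynomial.eval p) = B := by ext; simp [C]
    rw [RingHom.map_det, RingHom.mapMatrix_apply, Matrix.map_mul, eval_C, hB, Matrix.det_one]
    exact one_ne_zero
  · rw [RingHom.map_det, RingHom.mapMatrix_apply, Matrix.map_mul] at hd
    refine Matrix.vecMul_injective_iff.1 ((injective_iff_map_eq_zero (N.map φ).vecMulLinear).2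
      fun v hv => Matrix.eq_zero_of_vecMul_eq_zero hd ?_)
    rw [Matrix.vecMulLinear_apply] at hv
    rw [← Matrix.vecMul_vecMul, hv, Matrix.zero_vecMul]

theorem linearIndepOn_of_forall_linearMap {R V W α β : Type*} [Ring R] [AddCommGroup V] [Module R V]
    [AddCommGroup W] [Module R W] {v : α → V} {A : Set α} (c : α → β) (π : β → V →ₗ[R] W)
    (hπ : ∀ e a, c a ≠ e → π e (v a) = 0)
    (h : ∀ e, LinearIndepOn R (π e ∘ v) {a ∈ A | c a = e}) : LinearIndepOn R v A := by
  classical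
  refine linearIndepOn_iff'.2 fun t r htA relation a ha => ?_
  refine linearIndepOn_iff'.1 (h (c a)) {b ∈ t | c b = c a} r ?_ ?_ a (by simp [ha])
  · exact fun b hb => ⟨htA (Finset.mem_filter.1 hb).1, (Finset.mem_filter.1 hb).2⟩
  · have := congrArg (π (c a)) relation
    rw [map_sum, map_zero] at this
    rw [Finset.sum_filter_of_ne, ← this]
    · exact Finset.sum_congr rfl fun b _ => (map_smul _ _ _).symm
    · intro b _ hb
      by_contra hc
      exact hb (by rw [Function.comp_apply, hπ _ _ hc, smul_zero])

theorem sum_fiber_eq_zero_of_linearIndepOn {R V α β : Type*} [Ring R] [AddCommGroup V] [Module R V]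
    [Fintype β] [DecidableEq α] {v : α → V} {A : Set α} (hv : LinearIndepOn R v A) {p : β → α}
    (hp : ∀ b, p b ∈ A) {r : β → R} (hr : ∑ b, r b • v (p b) = 0) (z : α) :
    ∑ b with p b = z, r b = 0 := by
  have relation : ∑ z ∈ Finset.univ.image p, (∑ b with p b = z, r b) • v z = 0 := by
    rw [← hr, ← Finset.sum_fiberwise_of_maps_to (t := Finset.univ.image p) (g := p) (by simp)]
    refine Finset.sum_congr rfl fun z _ => ?_
    rw [Finset.sum_smul]
    exact Finset.sum_congr rfl fun b hb => by rw [(Finset.mem_filter.1 hb).2]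
  by_cases hz : z ∈ Finset.univ.image p
  · exact linearIndepOn_finset_iff.1 (hv.mono (by simpa [Set.range_subset_iff] using hp)) _
      relation z hz
  · rw [Finset.filter_false_of_mem, Finset.sum_empty]
    rintro b - rfl
    exact hz (Finset.mem_image_of_mem p (Finset.mem_univ b))

theorem exists_perm_of_sum_eq_sum {K V ι : Type*} [Field K] [AddCommGroup V] [Module K V]
    [Fintype ι] {v w : ι → V} (hv : LinearIndependent K v) (hw : ∀ m, ∃ i, ∃ c : K, w m = c • v i)
    (hvw : ∑ i, v i = ∑ i, w i) : ∃ π : Equiv.Perm ι, ∀ i, w i = v (π i) := by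
  classical
  choose π c hw using hw
  have sum_fiber : ∀ i, ∑ m with π m = i, c m = 1 := by
    have relation : ∑ i, ((∑ m with π m = i, c m) - 1) • v i = 0 := by
      simp only [sub_smul, one_smul, Finset.sum_sub_distrib, hvw, hw, sub_eq_zero, Finset.sum_smul]
      rw [← Finset.sum_fiberwise Finset.univ π fun m => c m • v (π m)]
      exact Finset.sum_congr rfl fun i _ => Finset.sum_congr rfl fun m hm => by
        rw [(Finset.mem_filter.1 hm).2]
    exact fun i => sub_eq_zero.1 (Fintype.linearIndependent_iff.1 hv _ relation i)
  have π_surjective : Function.Surjective π := fun i => by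
    by_contra! hi
    simpa [hi] using sum_fiber i
  have π_bijective := Finite.surjective_iff_bijective.1 π_surjective
  refine ⟨Equiv.ofBijective π π_bijective, fun m => ?_⟩
  have c_eq_one : c m = 1 := by
    simpa [π_bijective.injective.eq_iff, Finset.sum_filter] using sum_fiber (π m)
  rw [hw, c_eq_one, one_smul, Equiv.ofBijective_apply]

end LinearIndependence

section GenericPoint

theorem exists_eval_ne_zero {σ R : Type*} [CommRing R] [IsDomain R] [Infinite R]
    {F : MvPolynomial σ R} (hF : F ≠ 0) : ∃ p, MvPolynomial.eval p F ≠ 0 := by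
  by_contra! h
  exact hF (MvPolynomial.funext fun p => by rw [h p, map_zero])

universe u v w

variable {R : Type u} [CommRing R] [IsDomain R] {τ : Type v} [Finite τ] {α : Type*}

theorem map_algebraMap_span_range_eq_top (f : α → MvPolynomial τ R)
    (hf : ∀ (L : Type max u v) [Field L] [Algebra R L] [FaithfulSMul R L]
      [Algebra.IsAlgebraic R L] (y : τ → L), ∃ a, MvPolynomial.aeval y (f a) ≠ 0) :
    (Ideal.span (Set.range f)).map (MvPolynomial.map (algebraMap R (FractionRing R))) = ⊤ := by
  by_contra hne
  obtain ⟨m, hm, hle⟩ := Ideal.exists_le_maximal _ hne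
  let K := FractionRing R
  let L := MvPolynomial τ K ⧸ m
  let : Field L := Ideal.Quotient.field m
  have : FiniteDimensional K L := finite_of_finite_type_of_isJacobsonRing K L
  have : FaithfulSMul R L := FaithfulSMul.trans R K L
  have : Algebra.IsAlgebraic R L :=
    (IsFractionRing.comap_isAlgebraic_iff (A := R) (K := K) (C := L)).2 inferInstance
  obtain ⟨a, ha⟩ := hf L fun i => Ideal.Quotient.mk m (MvPolynomial.X i)
  have aeval_eq : (MvPolynomial.aeval fun i => Ideal.Quotient.mk m (MvPolynomial.X i)) =
      (Ideal.Quotient.mkₐ R m).comp (MvPolynomial.mapAlgHom (Algebra.ofId R K)) :=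
    MvPolynomial.algHom_ext fun i => by simp
  apply ha
  rw [aeval_eq]
  exact Ideal.Quotient.eq_zero_iff_mem.2
    (hle (Ideal.mem_map_of_mem _ (Ideal.subset_span ⟨a, rfl⟩)))

theorem exists_ne_zero_forall_exists_eval₂_ne_zero (f : α → MvPolynomial τ R)
    (hf : ∀ (L : Type max u v) [Field L] [Algebra R L] [FaithfulSMul R L]
      [Algebra.IsAlgebraic R L] (y : τ → L), ∃ a, MvPolynomial.aeval y (f a) ≠ 0) :
    ∃ F : R, F ≠ 0 ∧ ∀ {S : Type w} [CommRing S] (φ : R →+* S), φ F ≠ 0 →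
      ∀ q : τ → S, ∃ a, MvPolynomial.eval₂ φ q (f a) ≠ 0 := by
  let K := FractionRing R
  let : Algebra (MvPolynomial τ R) (MvPolynomial τ K) := MvPolynomial.algebraMvPolynomial
  have one_mem : (1 : MvPolynomial τ K) ∈
      (Ideal.span (Set.range f)).map (algebraMap (MvPolynomial τ R) (MvPolynomial τ K)) := by
    rw [MvPolynomial.algebraMap_def, map_algebraMap_span_range_eq_top f hf]
    trivial
  rw [IsLocalization.mem_map_algebraMap_iff
    ((nonZeroDivisors R).map (MvPolynomial.C (σ := τ)))] at one_mem
  obtain ⟨⟨⟨g, hg⟩, ⟨_, F, hF, rfl⟩⟩, h⟩ := one_mem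
  rw [one_mul] at h
  obtain rfl : MvPolynomial.C F = g :=
    MvPolynomial.map_injective _ (IsFractionRing.injective R K) h
  refine ⟨F, nonZeroDivisors.ne_zero hF, fun φ hφ q => ?_⟩
  by_contra! hq
  have span_le : Ideal.span (Set.range f) ≤ RingHom.ker (MvPolynomial.eval₂Hom φ q) :=
    Ideal.span_le.2 (Set.range_subset_iff.2 hq)
  exact hφ (by simpa using span_le hg)

-- Rabinowitsch trick: the variable `none` stands for an inverse of `h`.
theorem exists_ne_zero_forall_eval₂_eq_zero (f : α → MvPolynomial τ R) (h : MvPolynomial τ R)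
    (hf : ∀ (L : Type max u v) [Field L] [Algebra R L] [FaithfulSMul R L]
      [Algebra.IsAlgebraic R L] (y : τ → L),
      (∀ a, MvPolynomial.aeval y (f a) = 0) → MvPolynomial.aeval y h = 0) :
    ∃ F : R, F ≠ 0 ∧ ∀ {S : Type w} [Field S] (φ : R →+* S), φ F ≠ 0 →
      ∀ q : τ → S, (∀ a, MvPolynomial.eval₂ φ q (f a) = 0) → MvPolynomial.eval₂ φ q h = 0 := by
  let g : Option α → MvPolynomial (Option τ) R := fun a =>
    a.elim (1 - MvPolynomial.X none * MvPolynomial.rename some h)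
      fun a => MvPolynomial.rename some (f a)
  obtain ⟨F, hF, hF'⟩ := exists_ne_zero_forall_exists_eval₂_ne_zero g (by
    intro L _ _ _ _ y
    by_contra! hy
    have hfy : ∀ a, MvPolynomial.aeval (y ∘ some) (f a) = 0 := fun a => by
      simpa [g, MvPolynomial.aeval_rename] using hy (some a)
    simpa [g, MvPolynomial.aeval_rename, hf L _ hfy] using hy none)
  refine ⟨F, hF, fun φ hφ q hq => ?_⟩
  by_contra hne
  obtain ⟨a, ha⟩ := hF' φ hφ fun o => o.elim (MvPolynomial.eval₂ φ q h)⁻¹ q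
  refine ha ?_
  cases a with
  | none =>
    simp [g, MvPolynomial.eval₂_sub, MvPolynomial.eval₂_mul, MvPolynomial.eval₂_rename,
      Function.comp_def, inv_mul_cancel₀ hne]
  | some a => simpa [g, MvPolynomial.eval₂_rename, Function.comp_def] using hq a

end GenericPoint

section LinearDeriv

variable {R J : Type*} [CommRing R] [Fintype J] [DecidableEq J] {M : J → Type*} {N : Type*}
  [∀ j, AddCommGroup (M j)] [AddCommGroup N] [∀ j, Module R (M j)] [Module R N]

theorem linearDeriv_single (f : MultilinearMap R M N) (x : ∀ j, M j) (j : J) (u : M j) :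
    f.linearDeriv x (Pi.single j u) = f (Function.update x j u) := by
  rw [MultilinearMap.linearDeriv_apply, Finset.sum_eq_single j, Pi.single_eq_same]
  · intro i _ hij
    rw [Pi.single_eq_of_ne hij, MultilinearMap.map_update_zero]
  · simp

theorem linearDeriv_smul_self (f : MultilinearMap R M N) (x : ∀ j, M j)
    (c : J → R) : f.linearDeriv x (fun j => c j • x j) = (∑ j, c j) • f x := by
  simp only [MultilinearMap.linearDeriv_apply, MultilinearMap.map_update_smul,
    Function.update_eq_self, Finset.sum_smul]

end LinearDeriv

section Segre

variable {J : Type*} [Fintype J] {κ : J → Type*}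

/-- The Segre map `(x j)ⱼ ↦ ⨂ⱼ x j` in coordinates: tensors are functions of a multi-index, and the
entry of the decomposable tensor at `f` is `∏ j, x j (f j)`. -/
def segre (R : Type*) [CommSemiring R] (κ : J → Type*) :
    MultilinearMap R (fun j => κ j → R) ((∀ j, κ j) → R) :=
  MultilinearMap.pi fun f =>
    (MultilinearMap.mkPiAlgebra R J R).compLinearMap fun j => LinearMap.proj (f j)

@[simp]
theorem segre_apply {R : Type*} [CommSemiring R] (x : ∀ j, κ j → R) (f : ∀ j, κ j) :
    segre R κ x f = ∏ j, x j (f j) := rfl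

theorem map_segre {R S : Type*} [CommSemiring R] [CommSemiring S] (φ : R →+* S)
    (x : ∀ j, κ j → R) (f : ∀ j, κ j) :
    φ (segre R κ x f) = segre S κ (fun j a => φ (x j a)) f := by
  simp only [segre_apply, map_prod]

theorem segre_smul {R : Type*} [CommSemiring R] (c : J → R) (x : ∀ j, κ j → R) :
    segre R κ (fun j => c j • x j) = (∏ j, c j) • segre R κ x :=
  (segre R κ).map_smul_univ c x

theorem segre_ne_zero {R : Type*} [CommSemiring R] [NoZeroDivisors R] [Nontrivial R]
    {x : ∀ j, κ j → R} (hx : ∀ j, x j ≠ 0) : segre R κ x ≠ 0 := by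
  choose f hf using fun j => Function.ne_iff.1 (hx j)
  exact Function.ne_iff.2 ⟨f, Finset.prod_ne_zero_iff.2 fun j _ => hf j⟩

variable [DecidableEq J]

theorem segre_update_apply {R : Type*} [CommSemiring R] (x : ∀ j, κ j → R) (j : J) (u : κ j → R)
    (f : ∀ j, κ j) :
    segre R κ (Function.update x j u) f = u (f j) * ∏ i ∈ Finset.univ.erase j, x i (f i) := by
  rw [segre_apply, ← Finset.mul_prod_erase _ _ (Finset.mem_univ j), Function.update_self]
  congr 1
  exact Finset.prod_congr rfl fun i hi => by rw [Function.update_of_ne (Finset.ne_of_mem_erase hi)]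

theorem derivation_comp_segre {R : Type*} [CommRing R] (D : Derivation ℤ R R)
    (x : ∀ j, κ j → R) :
    D ∘ segre R κ x = (segre R κ).linearDeriv x fun j => D ∘ x j := by
  ext f
  rw [Function.comp_apply, segre_apply, derivation_prod]
  simp only [MultilinearMap.linearDeriv_apply, Finset.sum_apply, segre_update_apply,
    Function.comp_apply]

end Segre

section TangentSpace

variable {L ι J : Type*} [Field L] [Fintype ι] [Fintype J] [DecidableEq J] {κ : J → Type*}

/-- The differential of `x ↦ ∑ i, segre (x i)`. Its range is the sum of the tangent spaces to the
Segre cone at the points `segre (x i)`. -/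
def segreSumDeriv (x : ι → ∀ j, κ j → L) : (ι → ∀ j, κ j → L) →ₗ[L] ((∀ j, κ j) → L) :=
  ∑ i, (segre L κ).linearDeriv (x i) ∘ₗ LinearMap.proj i

theorem segreSumDeriv_apply (x u : ι → ∀ j, κ j → L) :
    segreSumDeriv x u = ∑ i, (segre L κ).linearDeriv (x i) (u i) := by
  simp [segreSumDeriv]

theorem segreSumDeriv_piSingle [DecidableEq ι] (x : ι → ∀ j, κ j → L) (i : ι) (u : ∀ j, κ j → L) :
    segreSumDeriv x (Pi.single i u) = (segre L κ).linearDeriv (x i) u := by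
  rw [segreSumDeriv_apply, Finset.sum_eq_single i, Pi.single_eq_same]
  · intro i' _ hi'
    rw [Pi.single_eq_of_ne hi', map_zero]
  · simp

theorem linearDeriv_mem_range_segreSumDeriv (x : ι → ∀ j, κ j → L) (i : ι) (u : ∀ j, κ j → L) :
    (segre L κ).linearDeriv (x i) u ∈ LinearMap.range (segreSumDeriv x) := by
  classical exact ⟨Pi.single i u, segreSumDeriv_piSingle x i u⟩

theorem segre_update_mem_range_segreSumDeriv (x : ι → ∀ j, κ j → L) (i : ι) (j : J) (u : κ j → L) :
    segre L κ (Function.update (x i) j u) ∈ LinearMap.range (segreSumDeriv x) :=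
  linearDeriv_single (segre L κ) (x i) j u ▸ linearDeriv_mem_range_segreSumDeriv x i _

theorem segre_mem_range_segreSumDeriv [Nonempty J] (x : ι → ∀ j, κ j → L) (i : ι) :
    segre L κ (x i) ∈ LinearMap.range (segreSumDeriv x) := by
  inhabit J
  simpa using segre_update_mem_range_segreSumDeriv x i default (x i default)

theorem derivation_comp_sum_segre (D : Derivation ℤ L L) (x : ι → ∀ j, κ j → L) :
    D ∘ (∑ i, segre L κ (x i)) = segreSumDeriv x fun i j => D ∘ x i j := by
  simp only [segreSumDeriv_apply, derivation_comp_sum, derivation_comp_segre]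

/-- The directions `c i j • x i j` of the tori rescaling the factors of the points `x i`. -/
def rescale (x : ι → ∀ j, κ j → L) : (ι → J → L) →ₗ[L] (ι → ∀ j, κ j → L) where
  toFun c i j := c i j • x i j
  map_add' c d := by ext; simp only [Pi.add_apply, add_smul]
  map_smul' a c := by ext; simp only [Pi.smul_apply, smul_assoc, RingHom.id_apply]

omit [Fintype ι] [Fintype J] [DecidableEq J] in
theorem rescale_injective {x : ι → ∀ j, κ j → L} (hx : ∀ i j, x i j ≠ 0) :
    Function.Injective (rescale x) := fun _ _ h =>
  funext₂ fun i j => smul_left_injective L (hx i j) (congrFun₂ h i j)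

theorem segreSumDeriv_rescale (x : ι → ∀ j, κ j → L) (c : ι → J → L) :
    segreSumDeriv x (rescale x c) = ∑ i, (∑ j, c i j) • segre L κ (x i) := by
  rw [segreSumDeriv_apply]
  exact Finset.sum_congr rfl fun i _ => linearDeriv_smul_self _ _ _

theorem range_segreSumDeriv_le_of_sum_segre_eq {x y : ι → ∀ j, κ j → L}
    (hD : ∀ u : ι → ∀ j, κ j → L, ∃ D : Derivation ℤ L L, ∀ i j, D ∘ x i j = u i j)
    (hxy : ∑ i, segre L κ (x i) = ∑ i, segre L κ (y i)) :
    LinearMap.range (segreSumDeriv x) ≤ LinearMap.range (segreSumDeriv y) := by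
  rintro _ ⟨u, rfl⟩
  obtain ⟨D, hDx⟩ := hD u
  refine ⟨fun i j => D ∘ y i j, ?_⟩
  rw [← derivation_comp_sum_segre, ← hxy, derivation_comp_sum_segre]
  simp only [hDx]

theorem derivation_comp_mem_range_segreSumDeriv {y : ι → ∀ j, κ j → L} {D : Derivation ℤ L L}
    {c : ι → J → L} (hD : (fun i j => D ∘ y i j) = rescale y c) {t : (∀ j, κ j) → L}
    (ht : t ∈ LinearMap.range (segreSumDeriv y)) : D ∘ t ∈ LinearMap.range (segreSumDeriv y) := by
  obtain ⟨u, rfl⟩ := ht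
  simp only [segreSumDeriv_apply, MultilinearMap.linearDeriv_apply, derivation_comp_sum,
    derivation_comp_segre]
  refine Submodule.sum_mem _ fun i _ => Submodule.sum_mem _ fun j _ => ?_
  let z := Function.update (y i) j (u i j)
  have hz : (fun l => D ∘ z l) =
      (fun l => c i l • z l) + Pi.single j (D ∘ u i j - c i j • u i j) := by
    ext1 l
    obtain rfl | hl := eq_or_ne l j
    · simp [z]
    · rw [Pi.add_apply, Pi.single_eq_of_ne hl, add_zero]
      simp only [z, Function.update_of_ne hl]
      exact congrFun₂ hD i l
  rw [← MultilinearMap.linearDeriv_apply, hz, map_add, linearDeriv_smul_self, linearDeriv_single,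
    Function.update_idem]
  exact add_mem (Submodule.smul_mem _ _ (segre_update_mem_range_segreSumDeriv y i j _))
    (segre_update_mem_range_segreSumDeriv y i j _)

end TangentSpace

section Uniqueness

variable {L ι J : Type*} [Field L] [Fintype ι] [Fintype J] [DecidableEq J] {κ : J → Type*}

/-- The infinitesimal rescalings of the factors of the points `x i` that fix each `segre (x i)`. -/
def trivialDirections (x : ι → ∀ j, κ j → L) : Submodule L (ι → ∀ j, κ j → L) :=
  (⨅ i, LinearMap.ker (∑ j, LinearMap.proj j ∘ₗ LinearMap.proj i : (ι → J → L) →ₗ[L] L)).map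
    (rescale x)

omit [Fintype ι] [DecidableEq J] in
theorem mem_trivialDirections {x u : ι → ∀ j, κ j → L} : u ∈ trivialDirections x ↔
    ∃ c : ι → J → L, (∀ i, ∑ j, c i j = 0) ∧ rescale x c = u := by
  simp [trivialDirections]

omit [Fintype ι] [DecidableEq J] in
theorem finrank_trivialDirections_le [Finite ι] (x : ι → ∀ j, κ j → L) {y : ι → ∀ j, κ j → L}
    (hy : ∀ i j, y i j ≠ 0) :
    Module.finrank L (trivialDirections x) ≤ Module.finrank L (trivialDirections y) :=
  (Submodule.finrank_map_le _ _).trans_eq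
    (Submodule.equivMapOfInjective _ (rescale_injective hy) _).finrank_eq

theorem trivialDirections_le_ker (x : ι → ∀ j, κ j → L) :
    trivialDirections x ≤ LinearMap.ker (segreSumDeriv x) := by
  intro u hu
  obtain ⟨c, hc, rfl⟩ := mem_trivialDirections.1 hu
  simp [segreSumDeriv_rescale, hc]

/-- The tangent spaces of the Segre cone at the points `segre (x i)` are independent: every relation
between tangent vectors is an identity forced by multilinearity. -/
def TangentIndependent (x : ι → ∀ j, κ j → L) : Prop :=
  LinearMap.ker (segreSumDeriv x) ≤ trivialDirections x

/-- The second fundamental form of `⨁ i, T (x i)` is nondegenerate: a direction `w` at `x i` whose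
mixed second derivatives with all tangent vectors stay in this space only rescales the factors
of `x i`. -/
def NondegenerateSecondForm (x : ι → ∀ j, κ j → L) : Prop :=
  ∀ i (w : ∀ j, κ j → L),
    (∀ j v, (segre L κ).linearDeriv (Function.update (x i) j v) (Function.update w j 0) ∈
      LinearMap.range (segreSumDeriv x)) →
    ∀ j, ∃ c : L, w j = c • x i j

/-- The contraction `id ⊗ (v ⊗ φ)`, which applies `φ` to the `j`-th factor of a tensor and puts `v`
in its place. -/
def replaceFactor (j : J) (φ : (κ j → L) →ₗ[L] L) (v : κ j → L) :
    ((∀ j, κ j) → L) →ₗ[L] ((∀ j, κ j) → L) :=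
  LinearMap.pi fun f => v (f j) • φ ∘ₗ LinearMap.funLeft L L (Function.update f j)

theorem replaceFactor_segre (j : J) (φ : (κ j → L) →ₗ[L] L) (v : κ j → L) (z : ∀ j, κ j → L) :
    replaceFactor j φ v (segre L κ z) = φ (z j) • segre L κ (Function.update z j v) := by
  ext f
  have slice : LinearMap.funLeft L L (Function.update f j) (segre L κ z) =
      (∏ i ∈ Finset.univ.erase j, z i (f i)) • z j := by
    ext a
    rw [LinearMap.funLeft_apply, segre_apply, ← Finset.mul_prod_erase _ _ (Finset.mem_univ j),
      Function.update_self, Pi.smul_apply, smul_eq_mul, mul_comm]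
    congr 1
    exact Finset.prod_congr rfl fun i hi => by
      rw [Function.update_of_ne (Finset.ne_of_mem_erase hi)]
  rw [replaceFactor, LinearMap.pi_apply, LinearMap.smul_apply, LinearMap.comp_apply, slice,
    map_smul, Pi.smul_apply, segre_update_apply]
  simp only [smul_eq_mul]
  ring

namespace TangentIndependent

variable {x y : ι → ∀ j, κ j → L}

theorem exists_eq_rescale [Nonempty J] (hx : TangentIndependent x) {w : ι → ∀ j, κ j → L}
    {a : ι → L} (hw : segreSumDeriv x w = ∑ i, a i • segre L κ (x i)) :
    ∃ c : ι → J → L, w = rescale x c ∧ ∀ i, ∑ j, c i j = a i := by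
  inhabit J
  let c₀ : ι → J → L := fun i => Pi.single default (a i)
  have hc₀ : ∀ i, ∑ j, c₀ i j = a i := fun i => by simp [c₀]
  have mem_ker : w - rescale x c₀ ∈ LinearMap.ker (segreSumDeriv x) := by
    rw [LinearMap.mem_ker, map_sub, segreSumDeriv_rescale, hw]
    simp only [hc₀, sub_self]
  obtain ⟨c, hc, hcw⟩ := mem_trivialDirections.1 (hx mem_ker)
  refine ⟨c + c₀, ?_, fun i => ?_⟩
  · rw [map_add, hcw, sub_add_cancel]
  · simp only [Pi.add_apply, Finset.sum_add_distrib, hc, hc₀, zero_add]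

theorem linearIndependent_segre [Nonempty J] (hx : TangentIndependent x) (hx₀ : ∀ i j, x i j ≠ 0) :
    LinearIndependent L fun i => segre L κ (x i) := by
  refine Fintype.linearIndependent_iff.2 fun a ha i => ?_
  obtain ⟨c, hc, hca⟩ := hx.exists_eq_rescale (w := 0) (a := a) (by rw [map_zero, ha])
  obtain rfl : c = 0 := rescale_injective hx₀ (by rw [← hc, map_zero])
  simpa using (hca i).symm

variable [∀ j, Finite (κ j)]

theorem range_eq_and_of_range_le (hx : TangentIndependent x) (hy₀ : ∀ i j, y i j ≠ 0)
    (hle : LinearMap.range (segreSumDeriv x) ≤ LinearMap.range (segreSumDeriv y)) :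
    LinearMap.range (segreSumDeriv x) = LinearMap.range (segreSumDeriv y) ∧
      TangentIndependent y := by
  have rank_nullity_x := (segreSumDeriv x).finrank_range_add_finrank_ker
  have rank_nullity_y := (segreSumDeriv y).finrank_range_add_finrank_ker
  have ker_x_le := Submodule.finrank_mono hx
  have le_ker_y := Submodule.finrank_mono (trivialDirections_le_ker y)
  have trivial_le := finrank_trivialDirections_le x hy₀
  have range_le := Submodule.finrank_mono hle
  exact ⟨Submodule.eq_of_le_of_finrank_eq hle (by omega),
    (Submodule.eq_of_le_of_finrank_eq (trivialDirections_le_ker y) (by omega)).ge⟩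

theorem mem_span_singleton_of_segre_eq_sum [∀ j, Nontrivial (κ j)] (hx : TangentIndependent x)
    {z : ∀ j, κ j → L} {a : ι → L} (hz : segre L κ z = ∑ i, a i • segre L κ (x i)) {i : ι}
    (hi : a i ≠ 0) (j : J) : x i j ∈ Submodule.span L {z j} := by
  by_contra hxz
  obtain ⟨φ, hφx, hφz⟩ := Submodule.exists_le_ker_of_notMem hxz
  have hφz : φ (z j) = 0 := hφz (Submodule.mem_span_singleton_self _)
  obtain ⟨v, hv⟩ : ∃ v, v ∉ Submodule.span L {x i j} := by
    have := Fintype.ofFinite (κ j)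
    by_contra! span_eq_top
    have finrank_le := finrank_le_one (x i j) fun v =>
      Submodule.mem_span_singleton.1 (span_eq_top v)
    rw [Module.finrank_fintype_fun_eq_card] at finrank_le
    exact finrank_le.not_gt Fintype.one_lt_card
  have relation : segreSumDeriv x (fun i => Pi.single j ((a i * φ (x i j)) • v)) = 0 := by
    have h := congrArg (replaceFactor j φ v) hz
    simp only [map_sum, map_smul, replaceFactor_segre, hφz, zero_smul] at h
    simp only [segreSumDeriv_apply, linearDeriv_single, MultilinearMap.map_update_smul, mul_smul, h]
  obtain ⟨c, -, hc⟩ := mem_trivialDirections.1 (hx relation)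
  have hcv : c i j • x i j = (a i * φ (x i j)) • v :=
    (congrFun₂ hc i j).trans (Pi.single_eq_same _ _)
  refine hv (Submodule.mem_span_singleton.2 ⟨(a i * φ (x i j))⁻¹ * c i j, ?_⟩)
  rw [mul_smul, hcv, inv_smul_smul₀ (mul_ne_zero hi hφx)]

theorem exists_segre_eq_smul [∀ j, Nontrivial (κ j)] (hx : TangentIndependent x)
    (hx₀ : ∀ i j, x i j ≠ 0) {z : ∀ j, κ j → L} (hz₀ : ∀ j, z j ≠ 0)
    (hz : segre L κ z ∈ Submodule.span L (Set.range fun i => segre L κ (x i))) :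
    ∃ i, ∃ c : L, segre L κ z = c • segre L κ (x i) := by
  obtain ⟨a, ha⟩ := (Submodule.mem_span_range_iff_exists_fun L).1 hz
  obtain ⟨i, hi⟩ : ∃ i, a i ≠ 0 := by
    by_contra! ha₀
    exact segre_ne_zero hz₀ (by simp [← ha, ha₀])
  choose c hc using fun j =>
    Submodule.mem_span_singleton.1 (hx.mem_span_singleton_of_segre_eq_sum ha.symm hi j)
  have hxz : segre L κ (x i) = (∏ j, c j) • segre L κ z := by
    rw [← segre_smul, funext hc]
  refine ⟨i, (∏ j, c j)⁻¹, ?_⟩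
  rw [hxz, inv_smul_smul₀]
  rintro hc₀
  exact segre_ne_zero (hx₀ i) (by rw [hxz, hc₀, zero_smul])

end TangentIndependent

theorem NondegenerateSecondForm.exists_eq_rescale {x y : ι → ∀ j, κ j → L}
    (hx : NondegenerateSecondForm x)
    (hT : LinearMap.range (segreSumDeriv x) = LinearMap.range (segreSumDeriv y))
    {D : Derivation ℤ L L} {c : ι → J → L} (hD : (fun i j => D ∘ y i j) = rescale y c) :
    ∃ d : ι → J → L, (fun i j => D ∘ x i j) = rescale x d := by
  have derivative_mem : ∀ i j v, (segre L κ).linearDeriv (Function.update (x i) j v)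
      (Function.update (fun l => D ∘ x i l) j 0) ∈ LinearMap.range (segreSumDeriv x) := by
    intro i j v
    have mem := derivation_comp_mem_range_segreSumDeriv hD
      (hT ▸ segre_update_mem_range_segreSumDeriv x i j v)
    have split : (fun l => D ∘ Function.update (x i) j v l) =
        Pi.single j (D ∘ v) + Function.update (fun l => D ∘ x i l) j 0 := by
      ext1 l
      obtain rfl | hl := eq_or_ne l j
      · simp
      · simp [hl]
    rw [← hT, derivation_comp_segre, split, map_add, linearDeriv_single,
      Function.update_idem] at mem
    exact (add_mem_cancel_left (segre_update_mem_range_segreSumDeriv x i j _)).1 mem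
  choose d hd using fun i => hx i _ (derivative_mem i)
  exact ⟨d, funext₂ hd⟩

theorem segre_mem_span_range_segre [Nonempty J] {x y : ι → ∀ j, κ j → L}
    (hD : ∀ u : ι → ∀ j, κ j → L, ∃ D : Derivation ℤ L L, ∀ i j, D ∘ x i j = u i j)
    (hx : NondegenerateSecondForm x) (hy : TangentIndependent y)
    (hT : LinearMap.range (segreSumDeriv x) = LinearMap.range (segreSumDeriv y))
    (hxy : ∑ i, segre L κ (x i) = ∑ i, segre L κ (y i)) (m : ι) :
    segre L κ (y m) ∈ Submodule.span L (Set.range fun i => segre L κ (x i)) := by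
  classical
  obtain ⟨u, hu⟩ : segre L κ (y m) ∈ LinearMap.range (segreSumDeriv x) :=
    hT ▸ segre_mem_range_segreSumDeriv y m
  obtain ⟨D, hDu⟩ := hD u
  obtain rfl : (fun i j => D ∘ x i j) = u := funext₂ hDu
  have deriv_y : segreSumDeriv y (fun i j => D ∘ y i j) =
      ∑ i, (Pi.single m 1 : ι → L) i • segre L κ (y i) := by
    rw [← derivation_comp_sum_segre, ← hxy, derivation_comp_sum_segre, hu]
    simp [Pi.single_apply]
  obtain ⟨c, hc, -⟩ := hy.exists_eq_rescale deriv_y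
  obtain ⟨d, hd⟩ := hx.exists_eq_rescale hT hc
  rw [← hu, hd, segreSumDeriv_rescale]
  exact Submodule.sum_mem _ fun i _ => Submodule.smul_mem _ _ (Submodule.subset_span ⟨i, rfl⟩)

theorem exists_perm_of_sum_segre_eq [Nontrivial J] [∀ j, Finite (κ j)] [∀ j, Nontrivial (κ j)]
    {x y : ι → ∀ j, κ j → L}
    (hD : ∀ u : ι → ∀ j, κ j → L, ∃ D : Derivation ℤ L L, ∀ i j, D ∘ x i j = u i j)
    (hx : TangentIndependent x) (hx' : NondegenerateSecondForm x) (hy₀ : ∀ i j, y i j ≠ 0)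
    (hxy : ∑ i, segre L κ (x i) = ∑ i, segre L κ (y i)) :
    ∃ π : Equiv.Perm ι, ∀ i, segre L κ (y i) = segre L κ (x (π i)) := by
  have hx₀ : ∀ i j, x i j ≠ 0 := by
    intro i j hij
    obtain ⟨D, hD⟩ := hD 1
    inhabit κ j
    simpa [hij] using congrFun (hD i j) default
  obtain ⟨range_eq, hy⟩ :=
    hx.range_eq_and_of_range_le hy₀ (range_segreSumDeriv_le_of_sum_segre_eq hD hxy)
  exact exists_perm_of_sum_eq_sum (hx.linearIndependent_segre hx₀)
    (fun m => hx.exists_segre_eq_smul hx₀ (hy₀ m)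
      (segre_mem_span_range_segre hD hx' hy range_eq hxy m)) hxy

end Uniqueness

section Frame

variable {ι J : Type*} [Fintype J] {κ : J → Type*}

/-- The decomposable tensors `⨂ j, g i j (f j)` built from a frame `g i j : κ j → (κ j → R)` of each
factor of each of the points `i`, indexed by the pairs `(i, f)`. -/
def frameSegre {R : Type*} [CommSemiring R] (g : ι → ∀ j, κ j → κ j → R) (z : ι × ∀ j, κ j) :
    (∀ j, κ j) → R :=
  segre R κ fun j => g z.1 j (z.2 j)

theorem map_frameSegre {R S : Type*} [CommSemiring R] [CommSemiring S] (φ : R →+* S)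
    (g : ι → ∀ j, κ j → κ j → R) :
    (fun z f => φ (frameSegre g z f)) = frameSegre fun i j a b => φ (g i j a b) :=
  funext₂ fun _ _ => map_segre φ _ _

/-- Some frames, hence generic ones, make the decomposable tensors labelled by `A` linearly
independent. -/
def FrameIndep (K : Type*) [Field K] (A : Set (ι × ∀ j, κ j)) : Prop :=
  ∃ g : ι → ∀ j, κ j → κ j → K, LinearIndepOn K (frameSegre g) A

theorem FrameIndep.mono {K : Type*} [Field K] {A B : Set (ι × ∀ j, κ j)} (h : FrameIndep K B)
    (hAB : A ⊆ B) : FrameIndep K A :=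
  h.imp fun _ hg => hg.mono hAB

theorem frameSegre_update [DecidableEq J] {R : Type*} [CommSemiring R]
    (g : ι → ∀ j, κ j → κ j → R) (i : ι) (d : ∀ j, κ j) (l : J) (a : κ l) :
    frameSegre g (i, Function.update d l a) =
      segre R κ (Function.update (fun j => g i j (d j)) l (g i l a)) := by
  refine congrArg (segre R κ) (funext fun j => ?_)
  obtain rfl | hj := eq_or_ne j l
  · simp
  · simp [hj]

theorem FrameIndep.exists_generic [∀ j, Zero (κ j)] [∀ j, Finite (κ j)] [Finite ι] {K L : Type*}
    [Field K] [Field L]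
    {A : Set (ι × ∀ j, κ j)} (h : FrameIndep K A)
    {φ : MvPolynomial (ι × Σ j, κ j) K →+* L} (hφ : Function.Injective φ) :
    ∃ G : ι → ∀ j, κ j → κ j → L, (∀ i j b, G i j 0 b = φ (.X (i, ⟨j, b⟩))) ∧
      LinearIndepOn L (frameSegre G) A := by
  classical
  obtain ⟨g, hg⟩ := h
  let P : ι → ∀ j, κ j → κ j → MvPolynomial (ι × Σ j, κ j) K := fun i j a b =>
    if a = 0 then .X (i, ⟨j, b⟩) else .C (g i j a b)
  have eval_P :
      (fun i j a b => MvPolynomial.eval (fun v => g v.1 v.2.1 0 v.2.2) (P i j a b)) = g := by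
    funext i j a b
    by_cases ha : a = 0 <;> simp [P, ha]
  obtain ⟨d, hd, hdA⟩ := exists_polynomial_forall_linearIndepOn (frameSegre P)
    (A := A) (p := fun v => g v.1 v.2.1 0 v.2.2) (by rwa [map_frameSegre, eval_P])
  have φd_ne_zero : φ d ≠ 0 := (map_ne_zero_iff φ hφ).2 fun h₀ => hd (by rw [h₀, map_zero])
  exact ⟨fun i j a b => φ (P i j a b), fun i j b => by simp [P],
    map_frameSegre φ P ▸ hdA φ φd_ne_zero⟩

end Frame

section Labels

variable {ι J : Type*} [DecidableEq J] {κ : J → Type*}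

theorem update_eq_update_iff_of_ne {d : ∀ j, κ j} {l : J} {a : κ l} (ha : a ≠ d l)
    {s : Σ j, κ j} :
    Function.update d s.1 s.2 = Function.update d l a ↔ s = ⟨l, a⟩ := by
  refine ⟨fun h => ?_, fun h => h ▸ rfl⟩
  obtain ⟨j, c⟩ := s
  obtain rfl : j = l := by
    by_contra hjl
    exact ha (by simpa [Ne.symm hjl] using (congrFun h l).symm)
  exact congrArg _ (Function.update_injective _ _ h)

variable [∀ j, Zero (κ j)]

theorem update_zero_eq_zero_iff {l : J} {a : κ l} :
    Function.update (0 : ∀ j, κ j) l a = 0 ↔ a = 0 := by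
  rw [Function.update_eq_self_iff, Pi.zero_apply]

theorem update_zero_ne_update_update_zero {j l : J} (hl : l ≠ j) {β : κ j} (hβ : β ≠ 0) {a : κ l}
    (ha : a ≠ 0) (s : Σ j, κ j) :
    Function.update (0 : ∀ j, κ j) s.1 s.2 ≠
      Function.update (Function.update (0 : ∀ j, κ j) j β) l a := by
  obtain ⟨m, c⟩ := s
  intro h
  obtain rfl | hm := eq_or_ne m l
  · exact hβ (by simpa [hl.symm] using (congrFun h j).symm)
  · exact ha (by simpa [hm.symm] using (congrFun h l).symm)

variable [Fintype J] [∀ j, DecidableEq (κ j)]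

theorem hammingNorm_update_le (d : ∀ j, κ j) (l : J) (a : κ l) :
    hammingNorm (Function.update d l a) ≤ hammingNorm d + 1 := by
  refine (Finset.card_le_card fun j hj => ?_).trans (Finset.card_insert_le l {j | d j ≠ 0})
  obtain rfl | hjl := eq_or_ne j l
  · exact Finset.mem_insert_self _ _
  · simpa [hjl] using hj

theorem hammingNorm_update_zero_le (l : J) (a : κ l) :
    hammingNorm (Function.update (0 : ∀ j, κ j) l a) ≤ 1 := by
  simpa using hammingNorm_update_le 0 l a

/-- The labels of the frame tensors spanning the tangent spaces at all points, where the label `0`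
in each factor stands for the point itself. -/
def tangentLabels (ι : Type*) {J : Type*} [Fintype J] (κ : J → Type*) [∀ j, Zero (κ j)]
    [∀ j, DecidableEq (κ j)] : Set (ι × ∀ j, κ j) :=
  {z | hammingNorm z.2 ≤ 1}

/-- The labels of the frame tensors spanning the tangent spaces at all points and, at the point `i`,
the second derivatives involving the direction `β` in the factor `j`. -/
def contactLabels (i : ι) (j : J) (β : κ j) : Set (ι × ∀ j, κ j) :=
  {z | hammingNorm z.2 ≤ 1 ∨ z.1 = i ∧ z.2 j = β ∧ hammingNorm z.2 ≤ 2}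

theorem update_mem_contactLabels (i : ι) {j : J} (β : κ j) (s : Σ j, κ j) :
    (i, Function.update (Function.update (0 : ∀ j, κ j) j β) s.1 s.2) ∈ contactLabels i j β := by
  obtain ⟨m, a⟩ := s
  obtain rfl | hm := eq_or_ne m j
  · exact Or.inl (by simpa using hammingNorm_update_zero_le m a)
  · exact Or.inr ⟨rfl, by simp [hm.symm], (hammingNorm_update_le _ _ _).trans
      (Nat.succ_le_succ (hammingNorm_update_zero_le j β))⟩

end Labels

section BasesAndTangents

variable {L ι J : Type*} [Field L] [Fintype J] {κ : J → Type*}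

section Differential

variable [DecidableEq J]

theorem linearDeriv_segre_basis [∀ j, Fintype (κ j)]
    (b : ι → ∀ j, Module.Basis (κ j) L (κ j → L)) (i : ι) (d : ∀ j, κ j) (w : ∀ j, κ j → L) :
    (segre L κ).linearDeriv (fun j => b i j (d j)) w =
      ∑ s : Σ j, κ j, (b i s.1).repr (w s.1) s.2 •
        frameSegre (fun i j => ⇑(b i j)) (i, Function.update d s.1 s.2) := by
  rw [MultilinearMap.linearDeriv_apply, Fintype.sum_sigma]
  refine Finset.sum_congr rfl fun j _ => ?_
  conv_lhs => rw [← (b i j).sum_repr (w j), MultilinearMap.map_update_sum]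
  exact Finset.sum_congr rfl fun a _ => by rw [MultilinearMap.map_update_smul, frameSegre_update]

theorem segreSumDeriv_basis [Fintype ι] [∀ j, Zero (κ j)] [∀ j, Fintype (κ j)]
    (b : ι → ∀ j, Module.Basis (κ j) L (κ j → L)) (u : ι → ∀ j, κ j → L) :
    segreSumDeriv (fun i j => b i j 0) u =
      ∑ s : ι × Σ j, κ j, (b s.1 s.2.1).repr (u s.1 s.2.1) s.2.2 •
        frameSegre (fun i j => ⇑(b i j)) (s.1, Function.update 0 s.2.1 s.2.2) := by
  rw [segreSumDeriv_apply, Fintype.sum_prod_type]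
  exact Finset.sum_congr rfl fun i _ => linearDeriv_segre_basis b i 0 (u i)

end Differential

variable [∀ j, Zero (κ j)] [∀ j, DecidableEq (κ j)]

theorem linearIndependent_of_tangentLabels {g : ι → ∀ j, κ j → κ j → L}
    (hg : LinearIndepOn L (frameSegre g) (tangentLabels ι κ)) (i : ι) (j : J) :
    LinearIndependent L (g i j) := by
  classical
  refine LinearIndependent.of_comp ((segre L κ).toLinearMap (fun j => g i j 0) j) ?_
  let p : κ j → tangentLabels ι κ := fun a =>
    ⟨(i, Function.update 0 j a), hammingNorm_update_zero_le j a⟩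
  have p_injective : Function.Injective p := fun a a' h =>
    Function.update_injective _ _ (congrArg (fun z => z.1.2) h)
  convert hg.comp p p_injective using 1
  exact funext fun a => (frameSegre_update g i 0 j a).symm

theorem exists_basis_of_tangentLabels [∀ j, Finite (κ j)] {g : ι → ∀ j, κ j → κ j → L}
    (hg : LinearIndepOn L (frameSegre g) (tangentLabels ι κ)) :
    ∃ b : ι → ∀ j, Module.Basis (κ j) L (κ j → L), (fun i j => ⇑(b i j)) = g :=
  have (j : J) := Fintype.ofFinite (κ j)
  ⟨fun i j => basisOfLinearIndependentOfCardEqFinrank (linearIndependent_of_tangentLabels hg i j)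
    (Module.finrank_fintype_fun_eq_card L).symm, by simp⟩

variable [DecidableEq J] [∀ j, Finite (κ j)]

theorem tangentIndependent_of_tangentLabels [Fintype ι] {g : ι → ∀ j, κ j → κ j → L}
    (hg : LinearIndepOn L (frameSegre g) (tangentLabels ι κ)) :
    TangentIndependent fun i j => g i j 0 := by
  have := Classical.decEq ι
  have (j : J) := Fintype.ofFinite (κ j)
  obtain ⟨b, rfl⟩ := exists_basis_of_tangentLabels hg
  intro u hu
  rw [LinearMap.mem_ker, segreSumDeriv_basis] at hu
  have fiber_sum := sum_fiber_eq_zero_of_linearIndepOn hg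
    (fun s : ι × Σ j, κ j => hammingNorm_update_zero_le s.2.1 s.2.2) hu
  simp only [Finset.sum_filter, Prod.mk.injEq, ite_and, Fintype.sum_prod_type,
    Finset.sum_ite_irrel, Finset.sum_const_zero, Finset.sum_ite_eq', Finset.mem_univ, if_true,
    Prod.forall] at fiber_sum
  refine mem_trivialDirections.2 ⟨fun i j => (b i j).repr (u i j) 0, fun i => ?_, ?_⟩
  · rw [← fiber_sum i 0, Fintype.sum_sigma]
    refine Finset.sum_congr rfl fun j _ => ?_
    simp only [update_zero_eq_zero_iff]
    exact ((Fintype.sum_eq_single 0 fun a ha => if_neg ha).trans (if_pos rfl)).symm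
  · refine funext₂ fun i j => (eq_repr_smul_of_forall_ne_repr_eq_zero (b i j) fun a ha => ?_).symm
    simpa [update_eq_update_iff_of_ne (d := (0 : ∀ j, κ j)) ha]
      using fiber_sum i (Function.update 0 j a)

theorem exists_eq_smul_of_contactLabels [Fintype ι] {g : ι → ∀ j, κ j → κ j → L} {i : ι} {j : J}
    {β : κ j} (hβ : β ≠ 0) (hg : LinearIndepOn L (frameSegre g) (contactLabels i j β))
    {w : ∀ j, κ j → L}
    (hw : (segre L κ).linearDeriv (Function.update (fun j => g i j 0) j (g i j β))
      (Function.update w j 0) ∈ LinearMap.range (segreSumDeriv fun i j => g i j 0))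
    {l : J} (hl : l ≠ j) : ∃ c : L, w l = c • g i l 0 := by
  have := Classical.decEq ι
  have (j : J) := Fintype.ofFinite (κ j)
  obtain ⟨b, rfl⟩ := exists_basis_of_tangentLabels (hg.mono fun _ => Or.inl)
  refine ⟨_, eq_repr_smul_of_forall_ne_repr_eq_zero (b i l) fun a ha => ?_⟩
  obtain ⟨u, hu⟩ := hw
  have base_eq : Function.update (fun j => b i j 0) j (b i j β) =
      fun m => b i m (Function.update (0 : ∀ j, κ j) j β m) := by
    ext1 m
    obtain rfl | hm := eq_or_ne m j <;> simp [*]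
  rw [base_eq, linearDeriv_segre_basis, segreSumDeriv_basis] at hu
  have fiber_sum := sum_fiber_eq_zero_of_linearIndepOn hg
    (p := Sum.elim (fun s : Σ j, κ j => (i, Function.update (Function.update 0 j β) s.1 s.2))
      fun s : ι × Σ j, κ j => (s.1, Function.update 0 s.2.1 s.2.2))
    (r := Sum.elim (fun s => (b i s.1).repr (Function.update w j 0 s.1) s.2)
      fun s => -(b s.1 s.2.1).repr (u s.1 s.2.1) s.2.2)
    (Sum.forall.2 ⟨update_mem_contactLabels i β,
      fun s => Or.inl (hammingNorm_update_zero_le s.2.1 s.2.2)⟩)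
    (by simpa [add_neg_eq_zero] using hu.symm)
    (i, Function.update (Function.update 0 j β) l a)
  have ha' : a ≠ Function.update (0 : ∀ j, κ j) j β l := by simpa [hl] using ha
  simpa [Finset.sum_filter, update_eq_update_iff_of_ne ha', hl,
    update_zero_ne_update_update_zero hl hβ ha] using fiber_sum

theorem nondegenerateSecondForm_of_contactLabels [Fintype ι] [Nontrivial J] {x : ι → ∀ j, κ j → L}
    (hx : ∀ i j, ∃ β : κ j, β ≠ 0 ∧ ∃ g : ι → ∀ j, κ j → κ j → L, (∀ i j, g i j 0 = x i j) ∧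
      LinearIndepOn L (frameSegre g) (contactLabels i j β)) :
    NondegenerateSecondForm x := by
  intro i w hw l
  obtain ⟨j, hj⟩ := exists_ne l
  obtain ⟨β, hβ, g, hgx, hg⟩ := hx i j
  obtain rfl : (fun i j => g i j 0) = x := funext₂ hgx
  exact exists_eq_smul_of_contactLabels hβ hg (hw j (g i j β)) hj.symm

end BasesAndTangents

section GeneralPoint

variable {ι J : Type*} [Fintype ι] [Fintype J] {κ : J → Type*}

/-- The polynomials in two families of points `x`, `y` which all vanish exactly if some `y i j` is
zero or the families have the same decomposable tensors up to a permutation. They are indexed by a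
choice of a coordinate to be compared for each permutation, and of a coordinate of each `y i j`. -/
def permObstruction [DecidableEq ι] {R : Type*} [CommRing R] (x y : ι → ∀ j, κ j → R)
    (c : (Equiv.Perm ι → ι × ∀ j, κ j) × (ι → ∀ j, κ j)) : R :=
  (∏ π, (segre R κ (y (c.1 π).1) (c.1 π).2 - segre R κ (x (π (c.1 π).1)) (c.1 π).2)) *
    ∏ i, ∏ j, y i j (c.2 i j)

theorem map_permObstruction [DecidableEq ι] {R S : Type*} [CommRing R] [CommRing S]
    (φ : R →+* S) (x y : ι → ∀ j, κ j → R) (c : (Equiv.Perm ι → ι × ∀ j, κ j) × (ι → ∀ j, κ j)) :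
    φ (permObstruction x y c) =
      permObstruction (fun i j a => φ (x i j a)) (fun i j a => φ (y i j a)) c := by
  simp [permObstruction]

theorem forall_map_sum_segre_sub_sum_segre_eq_zero_iff {R S : Type*} [CommRing R] [CommRing S]
    (φ : R →+* S) {x y : ι → ∀ j, κ j → R} :
    (∀ f, φ ((∑ i, segre R κ (x i) - ∑ i, segre R κ (y i)) f) = 0) ↔
      ∑ i, segre S κ (fun j a => φ (x i j a)) = ∑ i, segre S κ fun j a => φ (y i j a) := by
  simp only [funext_iff, Pi.sub_apply, Finset.sum_apply, map_sub, map_sum, map_segre, sub_eq_zero]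

theorem forall_permObstruction_eq_zero_iff [DecidableEq ι] {K : Type*} [Field K]
    {x y : ι → ∀ j, κ j → K} :
    (∀ c, permObstruction x y c = 0) ↔
      ((∀ i j, y i j ≠ 0) → ∃ π : Equiv.Perm ι, ∀ i, segre K κ (y i) = segre K κ (x (π i))) := by
  refine ⟨fun h hy => ?_, fun h c => ?_⟩
  · choose e he using fun i j => Function.ne_iff.1 (hy i j)
    by_contra! hπ
    choose i hi using hπ
    choose f hf using fun π => Function.ne_iff.1 (hi π)
    refine mul_ne_zero ?_ ?_ (h (fun π => (i π, f π), e))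
    · exact Finset.prod_ne_zero_iff.2 fun π _ => sub_ne_zero.2 (hf π)
    · exact Finset.prod_ne_zero_iff.2 fun i _ => Finset.prod_ne_zero_iff.2 fun j _ => he i j
  · by_cases hy : ∀ i j, y i j ≠ 0
    · obtain ⟨π, hπ⟩ := h hy
      exact mul_eq_zero_of_left
        (Finset.prod_eq_zero (Finset.mem_univ π) (by rw [hπ, sub_self])) _
    · push Not at hy
      obtain ⟨i, j, hij⟩ := hy
      exact mul_eq_zero_of_right _ (Finset.prod_eq_zero (Finset.mem_univ i)
        (Finset.prod_eq_zero (Finset.mem_univ j) (congrFun hij _)))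

variable [Nontrivial J] [∀ j, Zero (κ j)] [∀ j, Finite (κ j)] [∀ j, DecidableEq (κ j)]
  [Nonempty ι]

theorem exists_perm_of_algebraMap_X {K : Type*} [Field K] [CharZero K]
    (h : ∀ (i : ι) (j : J), ∃ β : κ j, β ≠ 0 ∧ FrameIndep K (contactLabels i j β))
    {L : Type*} [Field L] [Algebra (MvPolynomial (ι × Σ j, κ j) K) L]
    [FaithfulSMul (MvPolynomial (ι × Σ j, κ j) K) L]
    [Algebra.IsAlgebraic (MvPolynomial (ι × Σ j, κ j) K) L]
    {x y : ι → ∀ j, κ j → L}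
    (hx : ∀ i j a, x i j a = algebraMap (MvPolynomial (ι × Σ j, κ j) K) L (.X (i, ⟨j, a⟩)))
    (hy : ∀ i j, y i j ≠ 0) (hxy : ∑ i, segre L κ (x i) = ∑ i, segre L κ (y i)) :
    ∃ π : Equiv.Perm ι, ∀ i, segre L κ (y i) = segre L κ (x (π i)) := by
  classical
  have (j : J) : Nontrivial (κ j) :=
    let ⟨β, hβ, _⟩ := h (Classical.arbitrary ι) j
    ⟨β, 0, hβ⟩
  have exists_frames (i : ι) (j : J) : ∃ β : κ j, β ≠ 0 ∧ ∃ g : ι → ∀ j, κ j → κ j → L,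
      (∀ i j, g i j 0 = x i j) ∧ LinearIndepOn L (frameSegre g) (contactLabels i j β) := by
    obtain ⟨β, hβ, hA⟩ := h i j
    obtain ⟨g, hgx, hg⟩ := hA.exists_generic (FaithfulSMul.algebraMap_injective _ L)
    exact ⟨β, hβ, g, fun i j => funext fun b => (hgx i j b).trans (hx i j b).symm, hg⟩
  refine exists_perm_of_sum_segre_eq (fun u => ?_) ?_
    (nondegenerateSecondForm_of_contactLabels exists_frames) hy hxy
  · obtain ⟨D, hD⟩ := exists_derivation_algebraMap_X (k := K) (L := L)
      fun z : ι × Σ j, κ j => u z.1 z.2.1 z.2.2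
    exact ⟨D, fun i j => funext fun a => (congrArg D (hx i j a)).trans (hD (i, ⟨j, a⟩))⟩
  · obtain ⟨β, -, g, hgx, hg⟩ := exists_frames (Classical.arbitrary ι) (Classical.arbitrary J)
    obtain rfl : (fun i j => g i j 0) = x := funext₂ hgx
    exact tangentIndependent_of_tangentLabels (hg.mono fun _ => Or.inl)

theorem exists_ne_zero_forall_exists_perm {K : Type*} [Field K] [CharZero K]
    (h : ∀ (i : ι) (j : J), ∃ β : κ j, β ≠ 0 ∧ FrameIndep K (contactLabels i j β)) :
    ∃ F : MvPolynomial (ι × Σ j, κ j) K, F ≠ 0 ∧ ∀ p : ι → ∀ j, κ j → K,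
      MvPolynomial.eval (fun z => p z.1 z.2.1 z.2.2) F ≠ 0 → ∀ q : ι → ∀ j, κ j → K,
        (∀ i j, q i j ≠ 0) → ∑ i, segre K κ (q i) = ∑ i, segre K κ (p i) →
        ∃ π : Equiv.Perm ι, ∀ i, segre K κ (q i) = segre K κ (p (π i)) := by
  classical
  have (j : J) := Fintype.ofFinite (κ j)
  let R := MvPolynomial (ι × Σ j, κ j) K
  let P : ι → ∀ j, κ j → MvPolynomial (ι × Σ j, κ j) R := fun i j a => .C (.X (i, ⟨j, a⟩))
  let Q : ι → ∀ j, κ j → MvPolynomial (ι × Σ j, κ j) R := fun i j a => .X (i, ⟨j, a⟩)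
  let E : (∀ j, κ j) → MvPolynomial (ι × Σ j, κ j) R :=
    ∑ i, segre _ κ (P i) - ∑ i, segre _ κ (Q i)
  have generic (c) := exists_ne_zero_forall_eval₂_eq_zero E (permObstruction P Q c) (by
    intro L _ _ _ _ y hy
    let φ : MvPolynomial (ι × Σ j, κ j) R →+* L :=
      (MvPolynomial.aeval (R := R) y : _ →ₐ[R] L).toRingHom
    change φ _ = 0
    rw [map_permObstruction]
    refine forall_permObstruction_eq_zero_iff.2 (fun hQ => ?_) c
    exact exists_perm_of_algebraMap_X h (fun i j a => MvPolynomial.aeval_C y _) hQ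
      ((forall_map_sum_segre_sub_sum_segre_eq_zero_iff φ).1 hy))
  choose F hF hF' using generic
  refine ⟨∏ c, F c, Finset.prod_ne_zero_iff.2 fun c _ => hF c, fun p hp q hq hpq => ?_⟩
  rw [map_prod, Finset.prod_ne_zero_iff] at hp
  let φ := MvPolynomial.eval₂Hom (MvPolynomial.eval fun z : ι × Σ j, κ j => p z.1 z.2.1 z.2.2)
    fun z : ι × Σ j, κ j => q z.1 z.2.1 z.2.2
  have φP : (fun i j a => φ (P i j a)) = p := by ext; simp [φ, P]
  have φQ : (fun i j a => φ (Q i j a)) = q := by ext; simp [φ, Q]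
  refine forall_permObstruction_eq_zero_iff.1 (fun c => ?_) hq
  rw [← φP, ← φQ, ← map_permObstruction]
  exact hF' c _ (hp c (Finset.mem_univ c)) _
    ((forall_map_sum_segre_sub_sum_segre_eq_zero_iff φ).2 (by simpa [φ, P, Q] using hpq.symm))

end GeneralPoint

section Tensors

variable {q : ℕ} {a : Fin q → ℕ} {k : ℕ}

/-- The coordinates of a tensor in the standard basis. -/
def tenCoords (q : ℕ) (a : Fin q → ℕ) : Ten q a ≃ₗ[ℂ] ((∀ j, Fin (a j + 1)) → ℂ) :=
  (Basis.piTensorProduct fun j => Pi.basisFun ℂ (Fin (a j + 1))).equivFun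

theorem tenCoords_tprod (v : ∀ j, Fin (a j + 1) → ℂ) :
    tenCoords q a (tprod ℂ v) = segre ℂ (fun j => Fin (a j + 1)) v := by
  ext f
  simp [tenCoords, Basis.piTensorProduct_repr_tprod_apply]

theorem tenCoords_Phi (p : Fin k → ∀ j, Fin (a j + 1) → ℂ) :
    tenCoords q a (Phi a p) = ∑ i, segre ℂ (fun j => Fin (a j + 1)) (p i) := by
  simp only [Phi, map_sum, tenCoords_tprod]

theorem map_univ_eq_map_tprod_of_exists_perm {p : Fin k → ∀ j, Fin (a j + 1) → ℂ}
    (hp : ∀ y : Fin k → ∀ j, Fin (a j + 1) → ℂ, (∀ i j, y i j ≠ 0) →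
      ∑ i, segre ℂ _ (y i) = ∑ i, segre ℂ _ (p i) →
      ∃ π : Equiv.Perm (Fin k), ∀ i, segre ℂ _ (y i) = segre ℂ _ (p (π i)))
    {t : Fin k → Ten q a} (ht : ∀ i, IsDecomposable (t i)) (hsum : ∑ i, t i = Phi a p) :
    Finset.univ.val.map t = Finset.univ.val.map fun i => tprod ℂ (p i) := by
  choose y hy hty using ht
  obtain rfl : t = fun i => tprod ℂ (y i) := funext hty
  obtain ⟨π, hπ⟩ := hp y hy (by rw [← tenCoords_Phi, ← tenCoords_Phi, ← hsum, Phi])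
  have t_eq : (fun i => tprod ℂ (y i)) = (fun i => tprod ℂ (p i)) ∘ π := by
    funext i
    refine (tenCoords q a).injective ?_
    rw [Function.comp_apply, tenCoords_tprod, tenCoords_tprod, hπ]
  rw [t_eq, ← Multiset.map_map, Multiset.map_univ_val_equiv]

theorem identifiable_of_frameIndep_contactLabels (hq : 1 < q) (hk : 0 < k)
    (h : ∀ (i : Fin k) (j : Fin q), ∃ β : Fin (a j + 1), β ≠ 0 ∧
      FrameIndep ℂ (κ := fun j => Fin (a j + 1)) (contactLabels i j β)) :
    Identifiable q a k := by
  have : Nontrivial (Fin q) := Fin.nontrivial_iff_two_le.2 hq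
  have : Nonempty (Fin k) := ⟨⟨0, hk⟩⟩
  obtain ⟨F, hF, hFp⟩ := exists_ne_zero_forall_exists_perm h
  let X₀ : MvPolynomial (WIdx q a k) ℂ := ∏ i, ∏ j, .X (i, ⟨j, 0⟩)
  have X₀_ne_zero : X₀ ≠ 0 := Finset.prod_ne_zero_iff.2 fun i _ =>
    Finset.prod_ne_zero_iff.2 fun j _ => MvPolynomial.X_ne_zero _
  refine ⟨F * X₀, ?_, fun p hp => ?_⟩
  · obtain ⟨w, hw⟩ := exists_eval_ne_zero (mul_ne_zero hF X₀_ne_zero)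
    exact ⟨fun i j b => w (i, ⟨j, b⟩), hw⟩
  · rw [evalW, map_mul, mul_ne_zero_iff] at hp
    have hX₀ : ∀ i j, p i j 0 ≠ 0 := by simpa [X₀, Finset.prod_ne_zero_iff] using hp.2
    have p_ne_zero (i : Fin k) (j : Fin q) : p i j ≠ 0 := fun hij => hX₀ i j (congrFun hij 0)
    refine ⟨⟨fun i => tprod ℂ (p i), fun i => ⟨p i, p_ne_zero i, rfl⟩, rfl⟩,
      fun s t hs ht hsum htum => ?_⟩
    rw [map_univ_eq_map_tprod_of_exists_perm (hFp p hp.1) hs hsum,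
      map_univ_eq_map_tprod_of_exists_perm (hFp p hp.1) ht htum]

end Tensors

section Slices

variable {ι : Type*} {K : Type*} [Field K]

theorem FrameIndep.exists_forall {J : Type*} [Fintype J] {κ : J → Type*} [∀ j, Finite (κ j)]
    [Finite ι] [Infinite K] {E : Type*} [Finite E] {A : E → Set (ι × ∀ j, κ j)}
    (h : ∀ e, FrameIndep K (A e)) :
    ∃ g : ι → ∀ j, κ j → κ j → K, ∀ e, LinearIndepOn K (frameSegre g) (A e) := by
  have := Fintype.ofFinite E
  let X : ι → ∀ j, κ j → κ j → MvPolynomial (ι × Σ j, κ j × κ j) K := fun i j a b =>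
    .X (i, ⟨j, a, b⟩)
  have generic (e : E) : ∃ d : MvPolynomial (ι × Σ j, κ j × κ j) K, d ≠ 0 ∧
      ∀ p, MvPolynomial.eval p d ≠ 0 →
        LinearIndepOn K (frameSegre fun i j a b => p (i, ⟨j, a, b⟩)) (A e) := by
    obtain ⟨g, hg⟩ := h e
    obtain ⟨d, hd, hdA⟩ := exists_polynomial_forall_linearIndepOn (frameSegre X) (A := A e)
      (p := fun v => g v.1 v.2.1 v.2.2.1 v.2.2.2) (by simpa [map_frameSegre, X] using hg)
    refine ⟨d, fun h₀ => hd (by rw [h₀, map_zero]), fun p hp => ?_⟩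
    simpa [map_frameSegre, X] using hdA (MvPolynomial.eval p) hp
  choose d hd hdA using generic
  obtain ⟨p, hp⟩ := exists_eval_ne_zero (Finset.prod_ne_zero_iff.2 fun e _ => hd e)
  rw [map_prod, Finset.prod_ne_zero_iff] at hp
  exact ⟨_, fun e => hdA e p (hp e (Finset.mem_univ e))⟩

variable {n : ℕ} {κ : Fin (n + 1) → Type*}

theorem frameSegre_insertNth {R : Type*} [CommSemiring R] (p : Fin (n + 1))
    (v : ι → κ p → κ p → R) (g : ι → ∀ j, κ (p.succAbove j) → κ (p.succAbove j) → R)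
    (z : ι × ∀ j, κ j) (e : κ p) (f : ∀ j, κ (p.succAbove j)) :
    frameSegre (fun i => p.insertNth (α := fun j => κ j → κ j → R) (v i) (g i)) z
      (p.insertNth e f) = v z.1 (z.2 p) e * frameSegre g (z.1, p.removeNth z.2) f := by
  simp [frameSegre, segre_apply, Fin.prod_univ_succAbove _ p, Fin.removeNth]

/-- In the factor `p`, the points use permutations of one and the same basis, so that the
coordinates with a given label `e` in that factor only see the tensors with one label per point. -/
theorem FrameIndep.of_slices [Finite ι] [Infinite K] [∀ j, Finite (κ j)] (p : Fin (n + 1))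
    (b : ι → Equiv.Perm (κ p)) {A : Set (ι × ∀ j, κ j)}
    (h : ∀ e, FrameIndep K (κ := fun j => κ (p.succAbove j))
      {z | (z.1, p.insertNth ((b z.1).symm e) z.2) ∈ A}) :
    FrameIndep K A := by
  classical
  obtain ⟨g, hg⟩ := FrameIndep.exists_forall h
  let single : ι → κ p → κ p → K := fun i c => Pi.single (b i c) 1
  refine ⟨fun i => p.insertNth (single i) (g i), linearIndepOn_of_forall_linearMap
    (fun z => b z.1 (z.2 p)) (fun e => LinearMap.funLeft K K (p.insertNth e))
    (fun e z hz => ?_) fun e => ?_⟩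
  · ext f
    simp [LinearMap.funLeft_apply, frameSegre_insertNth, single, hz.symm]
  · let remove : (ι × ∀ j, κ j) → ι × ∀ j, κ (p.succAbove j) := fun z => (z.1, p.removeNth z.2)
    have insert_remove {z : ι × ∀ j, κ j} (hz : b z.1 (z.2 p) = e) :
        (z.1, p.insertNth ((b z.1).symm e) (p.removeNth z.2)) = z := by simp [← hz]
    refine (LinearIndepOn.comp_of_image (f := remove) ((hg e).mono ?_) ?_).congr ?_
    · rintro _ ⟨z, hz, rfl⟩
      exact (Set.mem_of_eq_of_mem (insert_remove hz.2) hz.1 :)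
    · rintro z hz z' hz' h
      rw [← insert_remove hz.2, ← insert_remove hz'.2]
      simp_all [remove]
    · rintro z ⟨-, hz⟩
      ext f
      simp [LinearMap.funLeft_apply, frameSegre_insertNth, single, remove, hz]

end Slices

section Points

variable {ι K J : Type*} [Field K] [Fintype J] {κ : J → Type*}

theorem FrameIndep.reindex {ι' : Type*} {A : Set (ι × ∀ j, κ j)} (h : FrameIndep K A) (ψ : ι' → ι)
    {B : Set (ι' × ∀ j, κ j)} (hB : ∀ z ∈ B, (ψ z.1, z.2) ∈ A)
    (hψ : Set.InjOn ψ (Prod.fst '' B)) : FrameIndep K B := by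
  obtain ⟨g, hg⟩ := h
  have relabel_injOn : Set.InjOn (fun z : ι' × ∀ j, κ j => (ψ z.1, z.2)) B := fun z hz z' hz' h =>
    have ⟨h₁, h₂⟩ := Prod.mk.inj h
    Prod.ext (hψ (Set.mem_image_of_mem _ hz) (Set.mem_image_of_mem _ hz') h₁) h₂
  exact ⟨g ∘ ψ, ((hg.mono (Set.image_subset_iff.2 hB)).comp_of_image relabel_injOn).congr
    fun _ _ => rfl⟩

theorem exists_segre_notMem_of_finrank_lt [∀ j, Fintype (κ j)]
    {S : Submodule K ((∀ j, κ j) → K)} (hS : Module.finrank K S < ∏ j, Fintype.card (κ j)) :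
    ∃ x : ∀ j, κ j → K, segre K κ x ∉ S := by
  classical
  by_contra! segre_mem
  have S_eq_top : S = ⊤ := by
    rw [eq_top_iff, ← (Pi.basisFun K (∀ j, κ j)).span_eq, Submodule.span_le]
    rintro _ ⟨f, rfl⟩
    rw [SetLike.mem_coe]
    convert segre_mem fun j => Pi.single (f j) 1 using 1
    ext f'
    simp [Pi.single_apply, Finset.prod_ite_zero, funext_iff]
  rw [S_eq_top, finrank_top, Module.finrank_pi, Fintype.card_pi] at hS
  exact hS.false

variable [∀ j, Zero (κ j)] [∀ j, Fintype (κ j)]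

theorem FrameIndep.insert_point [Finite ι] {A : Set (ι × ∀ j, κ j)} (h : FrameIndep K A) {i : ι}
    (hi : ∀ z ∈ A, z.1 ≠ i) (hA : A.ncard < ∏ j, Fintype.card (κ j)) :
    FrameIndep K (insert (i, 0) A) := by
  classical
  obtain ⟨g, hg⟩ := h
  have finrank_lt : Module.finrank K (Submodule.span K (frameSegre g '' A)) <
      ∏ j, Fintype.card (κ j) := by
    have := Fintype.ofFinite (frameSegre g '' A)
    refine (finrank_span_le_card _).trans_lt (lt_of_le_of_lt ?_ hA)
    rw [← Set.ncard_eq_toFinset_card']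
    exact Set.ncard_image_le
  obtain ⟨x, hx⟩ := exists_segre_notMem_of_finrank_lt finrank_lt
  have eqOn : Set.EqOn (frameSegre g) (frameSegre (Function.update g i fun j _ => x j)) A :=
    fun z hz => by simp [frameSegre, hi z hz]
  refine ⟨Function.update g i fun j _ => x j, (hg.congr eqOn).insert ?_⟩
  rw [← eqOn.image_eq]
  simpa [frameSegre] using hx

theorem FrameIndep.union_points [Finite ι] {A : Set (ι × ∀ j, κ j)} (h : FrameIndep K A)
    (T : Finset ι) (hT : ∀ z ∈ A, z.1 ∉ T) (hcard : A.ncard + #T ≤ ∏ j, Fintype.card (κ j)) :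
    FrameIndep K (A ∪ ↑T ×ˢ {0}) := by
  classical
  induction T using Finset.induction_on with
  | empty => simpa using h
  | insert i T hi ih =>
    rw [Finset.card_insert_of_notMem hi] at hcard
    simp only [Finset.mem_insert, not_or] at hT
    have ncard_le : (A ∪ (T : Set ι) ×ˢ {0}).ncard ≤ A.ncard + #T := by
      simpa [Set.ncard_prod] using Set.ncard_union_le A ((T : Set ι) ×ˢ {(0 : ∀ j, κ j)})
    convert (ih (fun z hz => (hT z hz).2) (by omega)).insert_point (i := i) ?_ (by omega) using 1
    · rw [Finset.coe_insert, Set.insert_prod, Set.image_singleton, Set.singleton_union,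
        Set.union_insert]
    · rintro z (hz | hz)
      · exact (hT z hz).1
      · exact ne_of_mem_of_not_mem hz.1 hi

end Points

section HammingBalls

theorem hammingNorm_insertNth {n : ℕ} {κ : Fin (n + 1) → Type*} [∀ j, Zero (κ j)]
    [∀ j, DecidableEq (κ j)] (p : Fin (n + 1)) (a : κ p) (c : ∀ j, κ (p.succAbove j)) :
    hammingNorm (p.insertNth a c) = (if a = 0 then 0 else 1) + hammingNorm c := by
  simp [hammingNorm, Finset.card_filter, Fin.sum_univ_succAbove _ p, ite_not]

variable {ι K J : Type*} [Field K] [Fintype J] {κ : J → Type*} [∀ j, Zero (κ j)]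
  [∀ j, DecidableEq (κ j)]

/-- The labels of the frame tensors spanning the tangent spaces at the points of `U` and the lines
of the remaining points. -/
def tangentLabelsOn (κ : J → Type*) [∀ j, Zero (κ j)] [∀ j, DecidableEq (κ j)] (U : Finset ι) :
    Set (ι × ∀ j, κ j) :=
  {z | hammingNorm z.2 ≤ 1 ∧ (z.1 ∈ U ∨ z.2 = 0)}

theorem FrameIndep.restrict_tangentLabels {t : ℕ} (h : FrameIndep K (tangentLabels (Fin t) κ))
    {U : Finset ι} (hU : #U ≤ t) :
    FrameIndep K ((U : Set ι) ×ˢ {c : ∀ j, κ j | hammingNorm c ≤ 1}) := by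
  obtain rfl | hU₀ := U.eq_empty_or_nonempty
  · exact ⟨0, by simp⟩
  · have : NeZero t := ⟨by have := Finset.card_pos.2 hU₀; omega⟩
    obtain ⟨ψ, -, hψ⟩ := Set.Finite.exists_injOn_of_encard_le (t := (Set.univ : Set (Fin t)))
      U.finite_toSet (by simpa using hU)
    exact h.reindex ψ (fun z hz => hz.2) (hψ.mono (Set.fst_image_prod_subset _ _))

theorem eq_update_zero_of_hammingNorm_le_one [DecidableEq J] {c : ∀ j, κ j}
    (hc : hammingNorm c ≤ 1) {j : J} (hj : c j ≠ 0) :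
    c = Function.update (0 : ∀ j, κ j) j (c j) := by
  refine Function.eq_update_iff.2 ⟨rfl, fun l hl => ?_⟩
  by_contra hcl
  exact hl (Finset.card_le_one.1 hc l (by simpa using hcl) j (by simpa using hj))

variable [∀ j, Fintype (κ j)]

theorem ncard_hammingNorm_le_one_le :
    {c : ∀ j, κ j | hammingNorm c ≤ 1}.ncard ≤ ∑ j, (Fintype.card (κ j) - 1) + 1 := by
  classical
  let ball : Finset (∀ j, κ j) :=
    insert 0 (Finset.univ.biUnion fun j =>
      ({0}ᶜ : Finset (κ j)).image (Function.update (0 : ∀ j, κ j) j))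
  have subset_ball : {c : ∀ j, κ j | hammingNorm c ≤ 1} ⊆ ball := by
    intro c hc
    obtain rfl | h₀ := eq_or_ne c 0
    · simp [ball]
    · obtain ⟨j, hj⟩ := Function.ne_iff.1 h₀
      rw [eq_update_zero_of_hammingNorm_le_one hc hj]
      simp only [ball, Finset.mem_coe, Finset.mem_insert, Finset.mem_biUnion, Finset.mem_image]
      exact Or.inr ⟨j, Finset.mem_univ j, c j, by simpa using hj, rfl⟩
  calc {c : ∀ j, κ j | hammingNorm c ≤ 1}.ncard
      ≤ #ball := Set.ncard_coe_finset ball ▸ Set.ncard_le_ncard subset_ball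
    _ ≤ ∑ j, (({0}ᶜ : Finset (κ j)).image (Function.update (0 : ∀ j, κ j) j)).card + 1 :=
      (Finset.card_insert_le _ _).trans (Nat.succ_le_succ Finset.card_biUnion_le)
    _ ≤ ∑ j, (Fintype.card (κ j) - 1) + 1 := by
      gcongr with j
      exact Finset.card_image_le.trans_eq (by rw [Finset.card_compl, Finset.card_singleton])

theorem frameIndep_tangentLabelsOn [Fintype ι] {t : ℕ} (h : FrameIndep K (tangentLabels (Fin t) κ))
    {U : Finset ι} (hU : #U ≤ t)
    (ht : (∑ j, (Fintype.card (κ j) - 1)) * t + Fintype.card ι ≤ ∏ j, Fintype.card (κ j)) :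
    FrameIndep K (tangentLabelsOn κ U) := by
  classical
  have ncard_le : ((U : Set ι) ×ˢ {c : ∀ j, κ j | hammingNorm c ≤ 1}).ncard ≤
      #U * (∑ j, (Fintype.card (κ j) - 1) + 1) := by
    rw [Set.ncard_prod, Set.ncard_coe_finset]
    exact Nat.mul_le_mul_left _ ncard_hammingNorm_le_one_le
  refine ((h.restrict_tangentLabels hU).union_points Uᶜ (by simp +contextual) ?_).mono ?_
  · have := Nat.mul_le_mul_left (∑ j, (Fintype.card (κ j) - 1)) hU
    have := Finset.card_add_card_compl U
    linarith
  · rintro ⟨i, c⟩ ⟨hc, hi⟩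
    by_cases hiU : i ∈ U
    · exact Or.inl ⟨hiU, hc⟩
    · exact Or.inr ⟨by simpa using hiU, hi.resolve_left hiU⟩

end HammingBalls

section Splitting

variable {ι K : Type*} [Field K] [Fintype ι] {n : ℕ} {κ : Fin (n + 1) → Type*}
  [∀ j, Zero (κ j)] [∀ j, DecidableEq (κ j)]

theorem hammingNorm_insertNth_le_one_iff {p : Fin (n + 1)} {a : κ p}
    {c : ∀ j, κ (p.succAbove j)} :
    hammingNorm (p.insertNth a c) ≤ 1 ↔ hammingNorm c ≤ 1 ∧ (a = 0 ∨ c = 0) := by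
  rw [hammingNorm_insertNth, ← hammingNorm_eq_zero (x := c)]
  split_ifs with ha <;> simp only [ha, true_or, false_or, and_true] <;> omega

theorem swap_zero_symm_apply_eq_zero_iff {α : Type*} [DecidableEq α] [Zero α] {a e : α} :
    (Equiv.swap 0 a).symm e = 0 ↔ e = a := by
  rw [Equiv.symm_apply_eq, Equiv.swap_apply_left]

variable [Infinite K] [∀ j, Fintype (κ j)] {p : Fin (n + 1)} {t : ℕ}

theorem frameIndep_tangentLabels_of_fiber_card_le (f : ι → κ p)
    (hf : ∀ e, #{i | f i = e} ≤ t)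
    (h : FrameIndep K (tangentLabels (Fin t) fun j => κ (p.succAbove j)))
    (ht : (∑ j, (Fintype.card (κ (p.succAbove j)) - 1)) * t + Fintype.card ι ≤
      ∏ j, Fintype.card (κ (p.succAbove j))) :
    FrameIndep K (tangentLabels ι κ) := by
  refine FrameIndep.of_slices p (fun i => Equiv.swap 0 (f i)) fun e =>
    (frameIndep_tangentLabelsOn h (hf e) ht).mono fun ⟨i, c⟩ hic => ?_
  obtain ⟨hc, hi⟩ := hammingNorm_insertNth_le_one_iff.1 hic
  rw [swap_zero_symm_apply_eq_zero_iff] at hi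
  exact ⟨hc, by simpa [eq_comm] using hi⟩

/-- The second derivatives at `i₀` all have the same label in the factor `p`, and cost one more
tangent space in the slice `e₁` that sees them. -/
theorem exists_frameIndep_contactLabels_of_fiber_card_le (f : ι → κ p)
    (hf : ∀ e, #{i | f i = e} ≤ t) {i₀ : ι} {e₁ : κ p} (hi₀ : f i₀ ≠ e₁)
    (he₁ : #{i | f i = e₁} < t)
    (h : FrameIndep K (tangentLabels (Fin t) fun j => κ (p.succAbove j)))
    (ht : (∑ j, (Fintype.card (κ (p.succAbove j)) - 1)) * t + Fintype.card ι ≤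
      ∏ j, Fintype.card (κ (p.succAbove j))) :
    ∃ β : κ p, β ≠ 0 ∧ FrameIndep K (contactLabels i₀ p β) := by
  classical
  refine ⟨(Equiv.swap 0 (f i₀)).symm e₁, fun hβ => hi₀ (swap_zero_symm_apply_eq_zero_iff.1 hβ).symm,
    FrameIndep.of_slices p (fun i => Equiv.swap 0 (f i)) fun e => ?_⟩
  let U : Finset ι := {i | f i = e ∨ i = i₀ ∧ e = e₁}
  have hU : #U ≤ t := by
    obtain rfl | he := eq_or_ne e e₁
    · have : U = insert i₀ ({i | f i = e} : Finset ι) := by ext; simp [U, or_comm]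
      exact this ▸ (Finset.card_insert_le _ _).trans he₁
    · simpa [U, he] using hf e
  refine (frameIndep_tangentLabelsOn h hU ht).mono fun ⟨i, c⟩ hic => ?_
  obtain hc | ⟨rfl, hβ, hc⟩ := hic
  · obtain ⟨hc, hi⟩ := hammingNorm_insertNth_le_one_iff.1 hc
    rw [swap_zero_symm_apply_eq_zero_iff] at hi
    exact ⟨hc, hi.imp_left fun hi => by simp [U, hi]⟩
  · obtain rfl : e = e₁ := by simpa using hβ
    rw [hammingNorm_insertNth, if_neg (mt swap_zero_symm_apply_eq_zero_iff.1 hi₀.symm)] at hc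
    exact ⟨by omega, Or.inl (by simp [U])⟩

end Splitting

section BalancedClasses

theorem card_filter_ofNat_eq {m : ℕ} [NeZero m] (k : ℕ) (e : Fin m) :
    #{i : Fin k | Fin.ofNat m i = e} = k / m + if e < k % m then 1 else 0 := by
  calc #{i : Fin k | Fin.ofNat m i = e} = Nat.count (· ≡ e [MOD m]) k := by
        rw [Nat.count_eq_card_filter_range, Finset.card_filter, Finset.card_filter,
          Finset.sum_range]
        simp [Fin.ext_iff, Nat.ModEq, Nat.mod_eq_of_lt e.isLt]
    _ = k / m + if e < k % m then 1 else 0 := by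
        rw [Nat.count_modEq_card k (NeZero.pos m), Nat.mod_eq_of_lt e.isLt]

theorem card_filter_ofNat_succ_eq_le (k r : ℕ) (e : Fin (r + 1)) :
    #{i : Fin k | Fin.ofNat (r + 1) i = e} ≤ (k + r) / (r + 1) := by
  rw [card_filter_ofNat_eq, Nat.le_div_iff_mul_le (Nat.add_one_pos r)]
  have := Nat.div_add_mod k (r + 1)
  split_ifs <;> linarith [Nat.zero_le (k % (r + 1))]

theorem exists_classes_card_eq {m k : ℕ} [NeZero m] (i₀ : Fin k) :
    ∃ f : Fin k → Fin m, f i₀ = 0 ∧ ∀ e, #{i | f i = e} = k / m + if e < k % m then 1 else 0 := by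
  have : NeZero k := ⟨i₀.pos.ne'⟩
  refine ⟨fun i => Fin.ofNat m (Equiv.swap i₀ 0 i : Fin k), by simp, fun e => ?_⟩
  rw [← card_filter_ofNat_eq]
  exact Finset.card_equiv (Equiv.swap i₀ 0) (by simp)

end BalancedClasses

section RecursiveSplitting

variable {r : ℕ}

/-- A numerical condition under which splitting off one factor of `(ℙʳ)ⁿ` after the other shows that
the tangent spaces at `t` general points are independent: the points are distributed evenly among
the `r + 1` slices of the factor. -/
def SplittingAdmissible (r : ℕ) : ℕ → ℕ → Prop
  | 0, t => t ≤ 1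
  | n + 1, t =>
    r * n * ((t + r) / (r + 1)) + t ≤ (r + 1) ^ n ∧ SplittingAdmissible r n ((t + r) / (r + 1))

theorem SplittingAdmissible.frameIndep {K : Type*} [Field K] [Infinite K] :
    ∀ {n t : ℕ}, SplittingAdmissible r n t →
      FrameIndep K (tangentLabels (Fin t) fun _ : Fin n => Fin (r + 1))
  | 0, t, h => by
    have frameIndep_empty : FrameIndep K (∅ : Set (Fin t × (Fin 0 → Fin (r + 1)))) := ⟨0, by simp⟩
    refine (frameIndep_empty.union_points .univ (by simp) ?_).mono fun z _ =>
      Or.inr ⟨by simp, Subsingleton.elim _ _⟩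
    simpa [SplittingAdmissible] using h
  | n + 1, t, h =>
    frameIndep_tangentLabels_of_fiber_card_le (p := 0) (fun i : Fin t => Fin.ofNat (r + 1) i)
      (card_filter_ofNat_succ_eq_le t r) h.2.frameIndep (by simpa [mul_comm r] using h.1)

theorem identifiable_of_splittingAdmissible {n k : ℕ} (hr : 0 < r) (hn : 0 < n) (hk : 0 < k)
    (h : SplittingAdmissible r n (k / (r + 1) + 1))
    (hk_le : r * n * (k / (r + 1) + 1) + k ≤ (r + 1) ^ n) :
    Identifiable (n + 1) (fun _ => r) k := by
  refine identifiable_of_frameIndep_contactLabels (Nat.succ_lt_succ hn) hk fun i j => ?_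
  obtain ⟨f, hfi, hf⟩ := exists_classes_card_eq (m := r + 1) i
  refine exists_frameIndep_contactLabels_of_fiber_card_le
    (κ := fun _ => Fin (r + 1)) (t := k / (r + 1) + 1) f (fun e => ?_)
    (e₁ := Fin.last r) ?_ ?_ h.frameIndep (by simpa [mul_comm r] using hk_le)
  · rw [hf]
    split_ifs <;> omega
  · rw [hfi]
    simpa [Fin.ext_iff] using hr.ne
  · have : k % (r + 1) ≤ r := Nat.le_of_lt_succ (Nat.mod_lt _ r.succ_pos)
    rw [hf, if_neg (by simpa using this)]
    exact Nat.lt_succ_self _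

end RecursiveSplitting

section Numerics

variable {n : ℕ}

theorem quadratic_le_four_pow_succ (hn : 5 ≤ n) : 14 * n * n + 27 * n + 18 ≤ 4 ^ (n + 1) := by
  induction n, hn using Nat.le_induction with
  | base => norm_num
  | succ n hn ih =>
    rw [pow_succ]
    nlinarith

theorem mul_le_four_pow (hn : 5 ≤ n) : 192 * n ≤ 4 ^ n := by
  induction n, hn using Nat.le_induction with
  | base => norm_num
  | succ n hn ih =>
    rw [pow_succ]
    linarith

theorem splittingAdmissible_three_of_mul_le {t : ℕ} (hn : 5 ≤ n)
    (ht : t * (3 * n + 3) ≤ 4 ^ n) : SplittingAdmissible 3 n t := by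
  induction n, hn using Nat.le_induction generalizing t with
  | base =>
    simp only [SplittingAdmissible]
    omega
  | succ n hn ih =>
    have quadratic_le := quadratic_le_four_pow_succ hn
    have four_mul_div_le : 4 * ((t + 3) / 4) ≤ t + 3 := Nat.mul_div_le _ _
    rw [pow_succ'] at ht quadratic_le
    have step_le : t * (3 * n + 4) + 9 * n ≤ 4 * 4 ^ n := by
      obtain ht_small | ht_large := le_total (2 * t) (9 * n)
      · have := Nat.mul_le_mul_right (3 * n + 4) ht_small
        nlinarith
      · linarith
    have next_le : (t + 3) * (3 * n + 3) ≤ 4 * 4 ^ n := by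
      obtain ht_small | ht_large := le_total t (3 * n + 3)
      · have := Nat.mul_le_mul_right (3 * n + 3) ht_small
        nlinarith
      · linarith
    have tangent_bound : 3 * n * ((t + 3) / 4) + t ≤ 4 ^ n := by
      have := Nat.mul_le_mul_left (3 * n) four_mul_div_le
      linarith
    have slice_bound : (t + 3) / 4 * (3 * n + 3) ≤ 4 ^ n := by
      have := Nat.mul_le_mul_right (3 * n + 3) four_mul_div_le
      linarith
    exact ⟨tangent_bound, ih slice_bound⟩

variable {k : ℕ}

theorem splittingAdmissible_three_div_four_add_one (hn : 4 ≤ n)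
    (hk : 16 * (k * (3 * n + 4)) ≤ 63 * 4 ^ n) : SplittingAdmissible 3 n (k / 4 + 1) := by
  obtain rfl | hn := hn.eq_or_lt
  · simp only [SplittingAdmissible]
    omega
  have linear_le := mul_le_four_pow hn
  have add_four_mul_le : (k + 4) * (3 * n + 3) ≤ 4 * 4 ^ n := by
    obtain hk_small | hk_large := le_total k 12
    · have := Nat.mul_le_mul_right (3 * n + 3) hk_small
      linarith
    · linarith
  have four_mul_div_add_one_le : 4 * (k / 4 + 1) ≤ k + 4 := by omega
  have := Nat.mul_le_mul_right (3 * n + 3) four_mul_div_add_one_le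
  exact splittingAdmissible_three_of_mul_le hn (by linarith)

theorem three_mul_mul_div_four_add_le_four_pow (hn : 4 ≤ n)
    (hk : 16 * (k * (3 * n + 4)) ≤ 63 * 4 ^ n) : 3 * n * (k / 4 + 1) + k ≤ 4 ^ n := by
  obtain rfl | hn := hn.eq_or_lt
  · omega
  have linear_le := mul_le_four_pow hn
  have := Nat.mul_le_mul_left (3 * n) (Nat.mul_div_le k 4)
  linarith

end Numerics

/-- `n ≥ 5` copies of `ℙ³` are `k`-identifiable
for `k ≤ (4^n - 4^{n-3})/(3n+1)`. -/
theorem stmt_10 (n : ℕ) (hn : 5 ≤ n) (k : ℕ) (hk : 0 < k)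
    (h : (k : ℚ) ≤ ((4 ^ n - 4 ^ (n - 3) : ℕ) : ℚ) / (3 * n + 1)) :
    Identifiable n (fun _ => 3) k := by
  obtain ⟨l, rfl⟩ := Nat.exists_eq_add_of_le' (show 3 ≤ n by omega)
  have hl : 4 ≤ l + 2 := by omega
  have hk_le : k * (3 * (l + 3) + 1) ≤ 4 ^ (l + 3) - 4 ^ l := by
    rw [le_div_iff₀ (by positivity)] at h
    exact_mod_cast h
  have hk_bound : 16 * (k * (3 * (l + 2) + 4)) ≤ 63 * 4 ^ (l + 2) := by
    rw [show 3 * (l + 3) + 1 = 3 * (l + 2) + 4 by ring, pow_add] at hk_le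
    rw [pow_add]
    omega
  exact identifiable_of_splittingAdmissible three_pos (by omega) hk
    (splittingAdmissible_three_div_four_add_one hl hk_bound)
    (three_mul_mul_div_four_add_le_four_pow hl hk_bound)
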